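/- arXiv:2311.03241 — 11 statements merged into one kernel-verified Lean document; each statement's English description precedes it below -/
import Mathlib

section
/- The function v_b is continuously differentiable on [0,∞) with v_b'(0) = 0; it satisfies ℒv_b(x) = −r·v_b(x) + μ·v_b'(x) + (σ²/2)·v_b''(x) = 0 for every x ∈ (0, b), and v_b'(x) = η(x) for every x ∈ (b, ∞). -/
/-- The barrier-policy value `v_b` is continuously differentiable on `[0,∞)` with
`v_b'(0) = 0`; it satisfies `ℒv_b(x) = 0` on `(0, b)` and `v_b'(x) = η(x)` on `(b, ∞)`. -/
theorem stmt4 (μ σ r : ℝ) (hσ : 0 < σ) (hr : 0 < r)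
    (γp γm : ℝ)
    (hγp : γp = (-μ + Real.sqrt (μ ^ 2 + 2 * r * σ ^ 2)) / σ ^ 2)
    (hγm : γm = (-μ - Real.sqrt (μ ^ 2 + 2 * r * σ ^ 2)) / σ ^ 2)
    (φ : ℝ → ℝ)
    (hφ : ∀ x, φ x = Real.exp (γp * x) / γp - Real.exp (γm * x) / γm)
    (η : ℝ → ℝ) (hη : ContinuousOn η (Set.Ici 0))
    (b : ℝ) (hb : 0 < b)
    (vb : ℝ → ℝ)
    (hvb1 : ∀ x ∈ Set.Icc 0 b, vb x = (η b / deriv φ b) * φ x)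
    (hvb2 : ∀ x ∈ Set.Ici b, vb x = η b * φ b / deriv φ b + ∫ u in b..x, η u) :
    ContDiffOn ℝ 1 vb (Set.Ici 0) ∧
    derivWithin vb (Set.Ici 0) 0 = 0 ∧
    (∀ x ∈ Set.Ioo 0 b,
      -r * vb x + μ * deriv vb x + σ ^ 2 / 2 * deriv (deriv vb) x = 0) ∧
    (∀ x ∈ Set.Ioi b, deriv vb x = η x) := by
  have hS0 : 0 < μ ^ 2 + 2 * r * σ ^ 2 := by positivity
  have hS := Real.sq_sqrt hS0.le
  have hSp := Real.sqrt_pos.2 hS0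
  set S := Real.sqrt (μ ^ 2 + 2 * r * σ ^ 2) with hSdef
  have hσ2 : σ ^ 2 ≠ 0 := by positivity
  have ep : σ ^ 2 * γp = -μ + S := by rw [hγp]; field_simp
  have em : σ ^ 2 * γm = -μ - S := by rw [hγm]; field_simp
  have qp : σ ^ 2 / 2 * γp ^ 2 + μ * γp - r = 0 := by
    have : σ ^ 2 * (σ ^ 2 / 2 * γp ^ 2 + μ * γp - r) = 0 := by
      have : (σ ^ 2 * γp + μ) ^ 2 = S ^ 2 := by rw [ep]; ring
      nlinarith
    exact (mul_eq_zero.1 this).resolve_left hσ2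
  have qm : σ ^ 2 / 2 * γm ^ 2 + μ * γm - r = 0 := by
    have : σ ^ 2 * (σ ^ 2 / 2 * γm ^ 2 + μ * γm - r) = 0 := by
      have : (σ ^ 2 * γm + μ) ^ 2 = S ^ 2 := by rw [em]; ring
      nlinarith
    exact (mul_eq_zero.1 this).resolve_left hσ2
  have p0 : γp ≠ 0 := by
    intro h
    rw [h] at qp
    simp at qp
    exact hr.ne' qp
  have m0 : γm ≠ 0 := by
    intro h
    rw [h] at qm
    simp at qm
    exact hr.ne' qm
  have hlt : γm < γp := by
    have : 0 < σ ^ 2 := by positivity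
    by_contra h
    nlinarith
  have he : ∀ γ x : ℝ, HasDerivAt (fun x => Real.exp (γ * x)) (γ * Real.exp (γ * x)) x := by
    intro γ x
    have := ((hasDerivAt_id x).const_mul γ).exp
    simpa [mul_comm] using this
  obtain ⟨ψ, hψ⟩ : ∃ ψ : ℝ → ℝ, ψ = fun x => Real.exp (γp * x) - Real.exp (γm * x) := ⟨_, rfl⟩
  have hφd : ∀ x, HasDerivAt φ (ψ x) x := by
    intro x
    have h := ((he γp x).div_const γp).sub ((he γm x).div_const γm)
    rw [mul_div_cancel_left₀ _ p0, mul_div_cancel_left₀ _ m0] at h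
    rw [hψ]
    exact h.congr_of_eventuallyEq (Filter.Eventually.of_forall hφ)
  have hψd : ∀ x, HasDerivAt ψ (γp * Real.exp (γp * x) - γm * Real.exp (γm * x)) x := by
    intro x
    rw [hψ]
    exact (he γp x).sub (he γm x)
  have hψc : Continuous ψ := by rw [hψ]; fun_prop
  have hψb : ψ b ≠ 0 := by
    have : Real.exp (γm * b) < Real.exp (γp * b) :=
      Real.exp_lt_exp.2 (mul_lt_mul_of_pos_right hlt hb)
    rw [hψ]
    exact (sub_pos.2 this).ne'
  rw [(hφd b).deriv] at hvb1 hvb2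
  obtain ⟨c, hc⟩ : ∃ c : ℝ, c = η b / ψ b := ⟨_, rfl⟩
  have hcb : c * ψ b = η b := by rw [hc]; field_simp
  rw [← hc] at hvb1
  have hηc : Continuous (fun x => η (max b x)) :=
    hη.comp_continuous (by fun_prop) (fun x => hb.le.trans (le_max_left b x))
  obtain ⟨G, hG⟩ : ∃ G : ℝ → ℝ, G = fun x => if x ≤ b then c * ψ x else η (max b x) := ⟨_, rfl⟩
  have hGc : Continuous G := by
    rw [hG]
    refine Continuous.if_le (by fun_prop) hηc continuous_id continuous_const ?_
    intro x hx
    subst hx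
    simpa using hcb
  have hG1 : ∀ x ≤ b, G x = c * ψ x := fun x hx => by rw [hG]; simp [hx]
  have hG2 : ∀ x, b ≤ x → G x = η x := by
    intro x hx
    rcases hx.eq_or_lt with h | h
    · rw [← h, hG1 b le_rfl, hcb]
    · rw [hG]; simp [not_le.2 h, hx]
  obtain ⟨V, hV⟩ : ∃ V : ℝ → ℝ, V = fun x => c * φ 0 + ∫ u in (0:ℝ)..x, G u := ⟨_, rfl⟩
  have hVd : ∀ x, HasDerivAt V (G x) x := by
    intro x
    rw [hV]
    exact (intervalIntegral.integral_hasDerivAt_right (hGc.intervalIntegrable _ _)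
      hGc.stronglyMeasurable.stronglyMeasurableAtFilter hGc.continuousAt).const_add _
  have hV1 : ∀ x ∈ Set.Icc 0 b, V x = c * φ x := by
    intro x hx
    have h1 : ∫ u in (0:ℝ)..x, G u = ∫ u in (0:ℝ)..x, c * ψ u := by
      apply intervalIntegral.integral_congr
      intro u hu
      rw [Set.uIcc_of_le hx.1] at hu
      exact hG1 u (hu.2.trans hx.2)
    have h2 : ∫ u in (0:ℝ)..x, c * ψ u = c * φ x - c * φ 0 :=
      intervalIntegral.integral_eq_sub_of_hasDerivAt (f := fun x => c * φ x)
        (fun u _ => (hφd u).const_mul c)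
        ((continuous_const.mul hψc).intervalIntegrable _ _)
    rw [hV]
    simp only [h1, h2]
    ring
  have hVv : ∀ x ∈ Set.Ici (0:ℝ), vb x = V x := by
    intro x hx
    rcases le_total x b with h | h
    · rw [hvb1 x ⟨hx, h⟩, hV1 x ⟨hx, h⟩]
    · rw [hvb2 x h]
      have h1 : ∫ u in b..x, G u = ∫ u in b..x, η u := by
        apply intervalIntegral.integral_congr
        intro u hu
        rw [Set.uIcc_of_le h] at hu
        exact hG2 u hu.1
      have h2 := hV1 b ⟨hb.le, le_rfl⟩
      have h3 := intervalIntegral.integral_add_adjacent_intervals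
        (hGc.intervalIntegrable (μ := MeasureTheory.volume) 0 b) (hGc.intervalIntegrable b x)
      rw [hV] at h2 ⊢
      simp only at h2 ⊢
      rw [← h3, ← h1, ← add_assoc, h2, hc]
      ring
  have hdv : ∀ x, 0 < x → deriv vb x = G x := by
    intro x hx
    apply HasDerivAt.deriv
    apply (hVd x).congr_of_eventuallyEq
    filter_upwards [Ioi_mem_nhds hx] with y hy
    exact hVv y (Set.mem_Ici.2 (le_of_lt (Set.mem_Ioi.1 hy)))
  refine ⟨?_, ?_, ?_, ?_⟩
  · have : ContDiff ℝ 1 V := by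
      rw [contDiff_one_iff_deriv]
      refine ⟨fun x => (hVd x).differentiableAt, ?_⟩
      rw [show deriv V = G from funext fun x => (hVd x).deriv]
      exact hGc
    exact this.contDiffOn.congr hVv
  · rw [derivWithin_congr hVv (hVv 0 Set.self_mem_Ici),
      (hVd 0).hasDerivWithinAt.derivWithin (uniqueDiffOn_Ici 0 0 Set.self_mem_Ici),
      hG1 0 hb.le, hψ]
    simp
  · intro x hx
    have h2 : deriv (deriv vb) x = c * (γp * Real.exp (γp * x) - γm * Real.exp (γm * x)) := by
      apply HasDerivAt.deriv
      apply ((hψd x).const_mul c).congr_of_eventuallyEq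
      filter_upwards [Ioo_mem_nhds hx.1 hx.2] with y hy
      rw [hdv y hy.1, hG1 y hy.2.le]
    rw [h2, hdv x hx.1, hG1 x hx.2.le, hvb1 x ⟨hx.1.le, hx.2.le⟩, hφ, hψ]
    have a1 : σ ^ 2 / 2 * γp + μ - r / γp = 0 := by
      field_simp
      linarith
    have a2 : σ ^ 2 / 2 * γm + μ - r / γm = 0 := by
      field_simp
      linarith
    linear_combination c * Real.exp (γp * x) * a1 - c * Real.exp (γm * x) * a2
  · intro x hx
    rw [hdv x (hb.trans hx), hG2 x (le_of_lt hx)]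
end

section
/- Suppose η is continuously differentiable on a neighborhood of b > 0. Then for every fixed x ≥ 0 with x ≠ b, the map c ↦ v_c(x) is differentiable at c = b, and its derivative equals (φ(x)/φ'(b)²)·(η'(b)φ'(b) − η(b)φ''(b)) when x < b, and equals (φ(b)/φ'(b)²)·(η'(b)φ'(b) − η(b)φ''(b)) when x > b. -/
/-- If `η` is `C¹` on a neighborhood of `b > 0`, then for every fixed `x ≥ 0` with `x ≠ b`,
the map `c ↦ v_c(x)` is differentiable at `c = b`, with derivative
`(φ(x)/φ'(b)²)·(η'(b)φ'(b) − η(b)φ''(b))` when `x < b` and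
`(φ(b)/φ'(b)²)·(η'(b)φ'(b) − η(b)φ''(b))` when `x > b`. -/
theorem stmt5 (μ σ r : ℝ) (hσ : 0 < σ) (hr : 0 < r)
    (γp γm : ℝ)
    (hγp : γp = (-μ + Real.sqrt (μ ^ 2 + 2 * r * σ ^ 2)) / σ ^ 2)
    (hγm : γm = (-μ - Real.sqrt (μ ^ 2 + 2 * r * σ ^ 2)) / σ ^ 2)
    (φ : ℝ → ℝ)
    (hφ : ∀ x, φ x = Real.exp (γp * x) / γp - Real.exp (γm * x) / γm)
    (η : ℝ → ℝ) (hη : ContinuousOn η (Set.Ici 0))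
    (b : ℝ) (hb : 0 < b)
    (hη1 : ∃ U ∈ nhds b, ContDiffOn ℝ 1 η U)
    (V : ℝ → ℝ → ℝ)
    (hV : ∀ c x : ℝ, V c x =
      if x ≤ c then (η c / deriv φ c) * φ x
      else η c * φ c / deriv φ c + ∫ u in c..x, η u) :
    ∀ x : ℝ, 0 ≤ x → x ≠ b →
      DifferentiableAt ℝ (fun c => V c x) b ∧
      (x < b → deriv (fun c => V c x) b =
        φ x / (deriv φ b) ^ 2 * (deriv η b * deriv φ b - η b * deriv (deriv φ) b)) ∧
      (b < x → deriv (fun c => V c x) b =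
        φ b / (deriv φ b) ^ 2 * (deriv η b * deriv φ b - η b * deriv (deriv φ) b)) := by
  intro x hx hxb
  obtain ⟨U, hU, hUη⟩ := hη1
  have hσ2 : 0 < σ ^ 2 := by positivity
  have hs : |μ| < Real.sqrt (μ ^ 2 + 2 * r * σ ^ 2) := by
    rw [← Real.sqrt_sq_eq_abs]
    apply Real.sqrt_lt_sqrt (sq_nonneg _)
    have : 0 < 2 * r * σ ^ 2 := by positivity
    linarith
  have hp : 0 < γp := by
    rw [hγp]
    apply div_pos _ hσ2
    linarith [le_abs_self μ]
  have hm : γm < 0 := by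
    rw [hγm]
    apply div_neg_of_neg_of_pos _ hσ2
    linarith [neg_abs_le μ]
  have hexp : ∀ g y : ℝ, HasDerivAt (fun x => Real.exp (g * x)) (Real.exp (g * y) * g) y := by
    intro g y
    have h := ((hasDerivAt_id y).const_mul g).exp
    simpa using h
  have hφd : ∀ y, HasDerivAt φ (Real.exp (γp * y) - Real.exp (γm * y)) y := by
    intro y
    have h := ((hexp γp y).div_const γp).sub ((hexp γm y).div_const γm)
    rw [mul_div_cancel_right₀ _ hp.ne', mul_div_cancel_right₀ _ hm.ne] at h
    rw [show φ = _ from funext hφ]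
    exact h
  have hdφ : deriv φ = fun y => Real.exp (γp * y) - Real.exp (γm * y) :=
    funext fun y => (hφd y).deriv
  have hpos : 0 < deriv φ b := by
    rw [hdφ]
    have : γm * b < γp * b := mul_lt_mul_of_pos_right (hm.trans hp) hb
    simpa using this
  have hφ2 : HasDerivAt (deriv φ) (deriv (deriv φ) b) b := by
    apply DifferentiableAt.hasDerivAt
    rw [hdφ]
    exact ((hexp γp b).sub (hexp γm b)).differentiableAt
  have hφ1 : HasDerivAt φ (deriv φ b) b := (hφd b).differentiableAt.hasDerivAt
  have hη' : HasDerivAt η (deriv η b) b :=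
    ((hUη.contDiffAt hU).differentiableAt (by norm_num)).hasDerivAt
  rcases lt_or_gt_of_ne hxb with hlt | hgt
  · have key : HasDerivAt (fun c => V c x)
        (φ x / (deriv φ b) ^ 2 * (deriv η b * deriv φ b - η b * deriv (deriv φ) b)) b := by
      have h := (hη'.div hφ2 hpos.ne').mul_const (φ x)
      have h2 : HasDerivAt (fun c => V c x) _ b := h.congr_of_eventuallyEq (by
        filter_upwards [lt_mem_nhds hlt] with c hc
        rw [hV, if_pos (le_of_lt hc)]
        rfl)
      convert h2 using 1
      ring
    exact ⟨key.differentiableAt, fun _ => key.deriv, fun h => absurd h hlt.not_gt⟩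
  · have key : HasDerivAt (fun c => V c x)
        (φ b / (deriv φ b) ^ 2 * (deriv η b * deriv φ b - η b * deriv (deriv φ) b)) b := by
      have hint : IntervalIntegrable η MeasureTheory.volume b x := by
        apply ContinuousOn.intervalIntegrable
        apply hη.mono
        rw [Set.uIcc_of_le (le_of_lt hgt)]
        intro u hu
        exact hb.le.trans hu.1
      have hmeas : StronglyMeasurableAtFilter η (nhds b) MeasureTheory.volume :=
        ⟨Set.Ici 0, Ici_mem_nhds hb, hη.aestronglyMeasurable measurableSet_Ici⟩
      have hI := intervalIntegral.integral_hasDerivAt_left hint hmeas hη'.continuousAt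
      have h := ((hη'.mul hφ1).div hφ2 hpos.ne').add hI
      have h2 : HasDerivAt (fun c => V c x) _ b := h.congr_of_eventuallyEq (by
        filter_upwards [gt_mem_nhds hgt] with c hc
        rw [hV, if_neg (not_le.mpr hc)]
        rfl)
      convert h2 using 1
      have := hpos.ne'
      simp only [Pi.mul_apply]
      field_simp
      ring
    exact ⟨key.differentiableAt, fun h => absurd h hgt.not_gt, fun _ => key.deriv⟩
end

section
/- Suppose η is differentiable at b > 0. Then the one-sided second derivatives of v_b at x = b exist: the left second derivative equals η(b)·φ''(b)/φ'(b) and the right second derivative equals η'(b). Consequently, v_b is twice differentiable at b if and only if η(b)·φ''(b) = η'(b)·φ'(b). -/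
/-- If `η` is differentiable at `b > 0`, the one-sided second derivatives of `v_b` at `b`
exist: the left one equals `η(b)·φ''(b)/φ'(b)` and the right one equals `η'(b)`.
Consequently, `v_b` is twice differentiable at `b` iff `η(b)·φ''(b) = η'(b)·φ'(b)`. -/
theorem stmt6 (μ σ r : ℝ) (hσ : 0 < σ) (hr : 0 < r)
    (γp γm : ℝ)
    (hγp : γp = (-μ + Real.sqrt (μ ^ 2 + 2 * r * σ ^ 2)) / σ ^ 2)
    (hγm : γm = (-μ - Real.sqrt (μ ^ 2 + 2 * r * σ ^ 2)) / σ ^ 2)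
    (φ : ℝ → ℝ)
    (hφ : ∀ x, φ x = Real.exp (γp * x) / γp - Real.exp (γm * x) / γm)
    (η : ℝ → ℝ) (hη : ContinuousOn η (Set.Ici 0))
    (b : ℝ) (hb : 0 < b) (hηb : DifferentiableAt ℝ η b)
    (vb : ℝ → ℝ)
    (hvb1 : ∀ x ∈ Set.Icc 0 b, vb x = (η b / deriv φ b) * φ x)
    (hvb2 : ∀ x ∈ Set.Ici b, vb x = η b * φ b / deriv φ b + ∫ u in b..x, η u) :
    HasDerivWithinAt (deriv vb) (η b * deriv (deriv φ) b / deriv φ b) (Set.Iic b) b ∧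
    HasDerivWithinAt (deriv vb) (deriv η b) (Set.Ici b) b ∧
    (DifferentiableAt ℝ (deriv vb) b ↔ η b * deriv (deriv φ) b = deriv η b * deriv φ b) := by
  have hs : |μ| < Real.sqrt (μ ^ 2 + 2 * r * σ ^ 2) := by
    apply Real.lt_sqrt_of_sq_lt
    rw [sq_abs]
    have : 0 < 2 * r * σ ^ 2 := by positivity
    linarith
  have hp : 0 < γp := by
    rw [hγp]
    apply div_pos _ (by positivity)
    linarith [le_abs_self μ]
  have hm : γm < 0 := by
    rw [hγm]
    apply div_neg_of_neg_of_pos _ (by positivity)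
    linarith [neg_abs_le μ]
  have hφd : ∀ x, HasDerivAt φ (Real.exp (γp * x) - Real.exp (γm * x)) x := by
    intro x
    have h : HasDerivAt (fun x => Real.exp (γp * x) / γp - Real.exp (γm * x) / γm)
        (Real.exp (γp * x) * (γp * 1) / γp - Real.exp (γm * x) * (γm * 1) / γm) x :=
      ((((hasDerivAt_id x).const_mul γp).exp).div_const γp).sub
        ((((hasDerivAt_id x).const_mul γm).exp).div_const γm)
    rw [show φ = fun x => Real.exp (γp * x) / γp - Real.exp (γm * x) / γm from funext hφ]
    convert h using 1
    field_simp [hp.ne', hm.ne]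
  have hdφ : deriv φ = fun x => Real.exp (γp * x) - Real.exp (γm * x) :=
    funext fun x => (hφd x).deriv
  have hφ' : ∀ x, HasDerivAt φ (deriv φ x) x := fun x => by
    rw [(hφd x).deriv]; exact hφd x
  have hφ2 : DifferentiableAt ℝ (deriv φ) b := by
    rw [hdφ]; fun_prop
  have hpos : 0 < deriv φ b := by
    rw [hdφ]
    have : γm * b < γp * b := by nlinarith
    simpa using this
  have hcat : ∀ x, 0 < x → ContinuousAt η x := fun x hx =>
    hη.continuousAt (Ici_mem_nhds hx)
  have hint : ∀ x, b ≤ x →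
      HasDerivAt (fun x => η b * φ b / deriv φ b + ∫ u in b..x, η u) (η x) x := by
    intro x hx
    apply HasDerivAt.const_add
    apply intervalIntegral.integral_hasDerivAt_right
    · apply ContinuousOn.intervalIntegrable
      apply hη.mono
      intro y hy
      rw [Set.uIcc_of_le hx] at hy
      exact hb.le.trans hy.1
    · exact ContinuousOn.stronglyMeasurableAtFilter isOpen_Ioi
        (hη.mono Set.Ioi_subset_Ici_self) x (hb.trans_le hx)
    · exact hcat x (hb.trans_le hx)
  have hdb : deriv vb b = η b := by
    have h1 : HasDerivWithinAt vb (η b) (Set.Iic b) b := by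
      have h := ((hφ' b).const_mul (η b / deriv φ b)).hasDerivWithinAt (s := Set.Iic b)
      rw [div_mul_cancel₀ _ hpos.ne'] at h
      refine h.congr_of_eventuallyEq ?_ (hvb1 b ⟨hb.le, le_rfl⟩)
      filter_upwards [self_mem_nhdsWithin, mem_nhdsWithin_of_mem_nhds (Ici_mem_nhds hb)]
        with x hx hx0
      exact hvb1 x ⟨hx0, hx⟩
    have h2 : HasDerivWithinAt vb (η b) (Set.Ici b) b :=
      (hint b le_rfl).hasDerivWithinAt.congr hvb2 (hvb2 b Set.self_mem_Ici)
    have h := h1.union h2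
    rw [Set.Iic_union_Ici, hasDerivWithinAt_univ] at h
    exact h.deriv
  have hl : ∀ x, 0 < x → x ≤ b → deriv vb x = η b / deriv φ b * deriv φ x := by
    intro x hx hxb
    rcases hxb.eq_or_lt with rfl | hlt
    · rw [hdb, div_mul_cancel₀ _ hpos.ne']
    · refine (((hφ' x).const_mul (η b / deriv φ b)).congr_of_eventuallyEq ?_).deriv
      filter_upwards [Icc_mem_nhds hx hlt] with y hy
      exact hvb1 y hy
  have hr' : ∀ x, b ≤ x → deriv vb x = η x := by
    intro x hxb
    rcases hxb.eq_or_lt with rfl | hlt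
    · exact hdb
    · refine ((hint x hxb).congr_of_eventuallyEq ?_).deriv
      filter_upwards [Ici_mem_nhds hlt] with y hy
      exact hvb2 y hy
  have L : HasDerivWithinAt (deriv vb) (η b * deriv (deriv φ) b / deriv φ b) (Set.Iic b) b := by
    have h := (hφ2.hasDerivAt.const_mul (η b / deriv φ b)).hasDerivWithinAt (s := Set.Iic b)
    rw [div_mul_eq_mul_div] at h
    refine h.congr_of_eventuallyEq ?_ (hl b hb le_rfl)
    filter_upwards [self_mem_nhdsWithin, mem_nhdsWithin_of_mem_nhds (Ioi_mem_nhds hb)]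
      with x hx hx0
    exact hl x hx0 hx
  have R : HasDerivWithinAt (deriv vb) (deriv η b) (Set.Ici b) b :=
    hηb.hasDerivAt.hasDerivWithinAt.congr (fun x hx => hr' x hx) (hr' b le_rfl)
  refine ⟨L, R, ?_, ?_⟩
  · intro hd
    have e1 := (uniqueDiffOn_Iic b b Set.self_mem_Iic).eq_deriv _ L
      hd.hasDerivAt.hasDerivWithinAt
    have e2 := (uniqueDiffOn_Ici b b Set.self_mem_Ici).eq_deriv _ R
      hd.hasDerivAt.hasDerivWithinAt
    rw [← e2, div_eq_iff hpos.ne'] at e1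
    exact e1
  · intro he
    rw [← div_eq_iff hpos.ne'] at he
    rw [he] at L
    have h := L.union R
    rw [Set.Iic_union_Ici, hasDerivWithinAt_univ] at h
    exact h.differentiableAt
end

section
/- Suppose η is continuously differentiable on a neighborhood of b > 0 and η(b) ≥ 0. Then for every x ≥ 0 with x ≠ b, the sign of the derivative of c ↦ v_c(x) at c = b (positive, zero, or negative) coincides with the sign of η'(b)φ'(b) − η(b)φ''(b); in particular, this derivative is zero for some x ≥ 0 with x ≠ b if and only if it is zero for every such x, if and only if η'(b)φ'(b) = η(b)φ''(b). -/
/-- If `η` is `C¹` near `b > 0` and `η(b) ≥ 0`, then for every `x ≥ 0` with `x ≠ b` the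
sign of the derivative of `c ↦ v_c(x)` at `c = b` coincides with the sign of
`E = η'(b)φ'(b) − η(b)φ''(b)`; in particular this derivative vanishes for some admissible
`x` iff it vanishes for all of them, iff `E = 0`. -/
theorem stmt7 (μ σ r : ℝ) (hσ : 0 < σ) (hr : 0 < r)
    (γp γm : ℝ)
    (hγp : γp = (-μ + Real.sqrt (μ ^ 2 + 2 * r * σ ^ 2)) / σ ^ 2)
    (hγm : γm = (-μ - Real.sqrt (μ ^ 2 + 2 * r * σ ^ 2)) / σ ^ 2)
    (φ : ℝ → ℝ)
    (hφ : ∀ x, φ x = Real.exp (γp * x) / γp - Real.exp (γm * x) / γm)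
    (η : ℝ → ℝ) (hη : ContinuousOn η (Set.Ici 0))
    (b : ℝ) (hb : 0 < b)
    (hη1 : ∃ U ∈ nhds b, ContDiffOn ℝ 1 η U)
    (hηb : 0 ≤ η b)
    (V : ℝ → ℝ → ℝ)
    (hV : ∀ c x : ℝ, V c x =
      if x ≤ c then (η c / deriv φ c) * φ x
      else η c * φ c / deriv φ c + ∫ u in c..x, η u)
    (D : ℝ → ℝ) (E : ℝ)
    (hD : ∀ x, D x = deriv (fun c => V c x) b)
    (hE : E = deriv η b * deriv φ b - η b * deriv (deriv φ) b) :
    (∀ x : ℝ, 0 ≤ x → x ≠ b →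
      ((0 < D x ↔ 0 < E) ∧ (D x = 0 ↔ E = 0) ∧ (D x < 0 ↔ E < 0))) ∧
    ((∃ x : ℝ, 0 ≤ x ∧ x ≠ b ∧ D x = 0) ↔ (∀ x : ℝ, 0 ≤ x → x ≠ b → D x = 0)) ∧
    ((∃ x : ℝ, 0 ≤ x ∧ x ≠ b ∧ D x = 0) ↔
      deriv η b * deriv φ b = η b * deriv (deriv φ) b) := by
  have hq : |μ| < Real.sqrt (μ ^ 2 + 2 * r * σ ^ 2) := by
    rw [← Real.sqrt_sq_eq_abs]
    apply Real.sqrt_lt_sqrt (sq_nonneg _)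
    have : 0 < 2 * r * σ ^ 2 := by positivity
    linarith
  have hs2 : 0 < σ ^ 2 := by positivity
  have hp : 0 < γp := by
    rw [hγp]
    apply div_pos _ hs2
    linarith [le_abs_self μ]
  have hm : γm < 0 := by
    rw [hγm]
    apply div_neg_of_neg_of_pos _ hs2
    linarith [neg_abs_le μ]
  have hφpos : ∀ x, 0 < φ x := by
    intro x
    rw [hφ]
    have h1 : 0 < Real.exp (γp * x) / γp := by positivity
    have h2 : Real.exp (γm * x) / γm < 0 := div_neg_of_pos_of_neg (Real.exp_pos _) hm
    linarith
  have hφe : φ = fun x => Real.exp (γp * x) / γp - Real.exp (γm * x) / γm := funext hφ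
  have hexp : ∀ g x : ℝ, HasDerivAt (fun x => Real.exp (g * x)) (Real.exp (g * x) * g) x := by
    intro g x
    have := ((hasDerivAt_id x).const_mul g).exp
    simpa using this
  have hφd : ∀ x, HasDerivAt φ (Real.exp (γp * x) - Real.exp (γm * x)) x := by
    intro x
    rw [hφe]
    have h := ((hexp γp x).div_const γp).sub ((hexp γm x).div_const γm)
    rw [mul_div_cancel_right₀ _ hp.ne', mul_div_cancel_right₀ _ hm.ne] at h
    exact h
  have hde : deriv φ = fun x => Real.exp (γp * x) - Real.exp (γm * x) :=
    funext fun x => (hφd x).deriv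
  have hφ2 : HasDerivAt (deriv φ) (deriv (deriv φ) b) b := by
    apply DifferentiableAt.hasDerivAt
    rw [hde]
    exact ((hexp γp b).sub (hexp γm b)).differentiableAt
  have hφ1 : HasDerivAt φ (deriv φ b) b := (hφd b).differentiableAt.hasDerivAt
  have hdpos : 0 < deriv φ b := by
    rw [hde]
    have : Real.exp (γm * b) < Real.exp (γp * b) := by
      apply Real.exp_lt_exp.2
      nlinarith
    simpa using this
  have hηd : HasDerivAt η (deriv η b) b := by
    obtain ⟨U, hU, hc⟩ := hη1
    exact ((hc.contDiffAt hU).differentiableAt (by norm_num)).hasDerivAt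
  have hG : HasDerivAt (fun c => η c / deriv φ c) (E / deriv φ b ^ 2) b := by
    rw [hE]
    exact hηd.div hφ2 hdpos.ne'
  have key : ∀ x : ℝ, 0 ≤ x → x ≠ b → ∃ k, 0 < k ∧ D x = E * k := by
    intro x hx hxb
    rcases lt_or_gt_of_ne hxb with h | h
    · refine ⟨φ x / deriv φ b ^ 2, div_pos (hφpos x) (by positivity), ?_⟩
      rw [hD]
      have h1 := hG.mul_const (φ x)
      have h2 : (fun c => V c x) =ᶠ[nhds b] fun c => η c / deriv φ c * φ x := by
        filter_upwards [lt_mem_nhds h] with c hc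
        rw [hV, if_pos hc.le]
      rw [h2.deriv_eq, h1.deriv]
      ring
    · refine ⟨φ b / deriv φ b ^ 2, div_pos (hφpos b) (by positivity), ?_⟩
      rw [hD]
      have hint : IntervalIntegrable η MeasureTheory.volume b x := by
        apply ContinuousOn.intervalIntegrable
        apply hη.mono
        rw [Set.uIcc_of_le h.le]
        intro y hy
        exact hb.le.trans hy.1
      have hI : HasDerivAt (fun c => ∫ u in c..x, η u) (-η b) b := by
        apply intervalIntegral.integral_hasDerivAt_left hint _ hηd.continuousAt
        exact (hη.mono Set.Ioi_subset_Ici_self).stronglyMeasurableAtFilter isOpen_Ioi b hb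
      have h1 := (hG.mul hφ1).add hI
      have h2 : (fun c => V c x) =ᶠ[nhds b]
          ((fun c => η c / deriv φ c) * φ + fun c => ∫ u in c..x, η u) := by
        filter_upwards [gt_mem_nhds h] with c hc
        rw [hV, if_neg (not_le.2 hc)]
        simp only [Pi.add_apply, Pi.mul_apply]
        ring
      rw [h2.deriv_eq, h1.deriv]
      have := hdpos.ne'
      field_simp
      ring
  have main : ∀ x : ℝ, 0 ≤ x → x ≠ b →
      ((0 < D x ↔ 0 < E) ∧ (D x = 0 ↔ E = 0) ∧ (D x < 0 ↔ E < 0)) := by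
    intro x hx hxb
    obtain ⟨k, hk, hDk⟩ := key x hx hxb
    rw [hDk]
    refine ⟨mul_pos_iff_of_pos_right hk, ?_, ?_⟩
    · simp [hk.ne']
    · exact ⟨fun h => by by_contra h2; nlinarith [mul_nonneg (not_lt.1 h2) hk.le], fun h => mul_neg_of_neg_of_pos h hk⟩
  have hex : (∃ x : ℝ, 0 ≤ x ∧ x ≠ b ∧ D x = 0) ↔ E = 0 := by
    constructor
    · rintro ⟨x, hx, hxb, h⟩
      exact (main x hx hxb).2.1.1 h
    · intro h
      exact ⟨0, le_rfl, hb.ne, (main 0 le_rfl hb.ne).2.1.2 h⟩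
  refine ⟨main, ?_, ?_⟩
  · constructor
    · intro h x hx hxb
      exact (main x hx hxb).2.1.2 (hex.1 h)
    · intro h
      exact ⟨0, le_rfl, hb.ne, h 0 le_rfl hb.ne⟩
  · rw [hex, hE, sub_eq_zero]
end

section
/- For the parameter values σ = √2, μ = 0.508378, r = 0.00520074, the equation b² − b = (e^{γ₊b} − e^{γ₋b})/(γ₊e^{γ₊b} − γ₋e^{γ₋b}) has at least three distinct solutions in (1, ∞): there exist b₁ ∈ (4.18, 4.19), b₂ ∈ (5.76, 5.77) and b₃ ∈ (8.00, 8.01) each satisfying the equation. -/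
/-- Lower bound for the exponential via its Taylor polynomial at an eighth of the argument. -/
lemma exp_lower_aux (L x y : ℝ) (hx : 0 ≤ x) (hxy : 8 * x ≤ y)
    (h : L ≤ (∑ i ∈ Finset.range 11, x ^ i / (i.factorial : ℝ)) ^ 8) : L ≤ Real.exp y := by
  have h1 := Real.sum_le_exp_of_nonneg hx 11
  have h0 : 0 ≤ ∑ i ∈ Finset.range 11, x ^ i / (i.factorial : ℝ) :=
    Finset.sum_nonneg fun i _ => by positivity
  have h2 : Real.exp (8 * x) = Real.exp x ^ 8 := by
    rw [← Real.exp_nat_mul]; norm_num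
  calc L ≤ _ := h
    _ ≤ Real.exp x ^ 8 := pow_le_pow_left₀ h0 h1 8
    _ = Real.exp (8 * x) := h2.symm
    _ ≤ Real.exp y := Real.exp_le_exp.2 hxy

/-- Upper bound for the exponential via its Taylor polynomial at an eighth of the argument. -/
lemma exp_upper_aux (U x y : ℝ) (hx : 0 ≤ x) (hx1 : x ≤ 1) (hxy : y ≤ 8 * x)
    (h : ((∑ i ∈ Finset.range 11, x ^ i / (i.factorial : ℝ)) +
      x ^ 11 * (11 + 1) / ((Nat.factorial 11 : ℝ) * 11)) ^ 8 ≤ U) : Real.exp y ≤ U := by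
  have h1 := Real.exp_bound' hx hx1 (n := 11) (by norm_num)
  have h2 : Real.exp (8 * x) = Real.exp x ^ 8 := by
    rw [← Real.exp_nat_mul]; norm_num
  calc Real.exp y ≤ Real.exp (8 * x) := Real.exp_le_exp.2 hxy
    _ = Real.exp x ^ 8 := h2
    _ ≤ _ := pow_le_pow_left₀ (Real.exp_pos _).le (by exact_mod_cast h1) 8
    _ ≤ U := h

lemma mul_upper_aux (E L c c1 : ℝ) (hL : 0 ≤ L) (hE : L ≤ E) (hc : c ≤ c1) (hc1 : c1 ≤ 0) :
    E * c ≤ L * c1 := by nlinarith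

lemma mul_lower_aux (E U c c0 : ℝ) (hE0 : 0 ≤ E) (hE : E ≤ U) (hc : c0 ≤ c) (hc1 : c0 ≤ 0) :
    U * c0 ≤ E * c := by nlinarith

/-- The cleared-denominator form of the equation, written in terms of `s = γ₊ - γ₋`. -/
noncomputable def auxF (s b : ℝ) : ℝ :=
  Real.exp (s * b) * ((b ^ 2 - b) * ((s - 0.508378) / 2) - 1) + 1
    + (b ^ 2 - b) * ((s + 0.508378) / 2)

lemma auxF_cont (s : ℝ) : Continuous (auxF s) := by
  unfold auxF; fun_prop

lemma auxF_0 (s : ℝ) (_h0 : 0.52844219256 ≤ s) (_h1 : s ≤ 0.52844219257) : auxF s 4.18 < 0 := by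
  have hE : 9.105586 ≤ Real.exp (s * 4.18) := by
    apply exp_lower_aux _ 0.27611104561 _ (by norm_num) (by linarith)
    norm_num [Finset.sum_range_succ, Nat.factorial]
  have h := mul_upper_aux _ 9.105586 ((4.18 ^ 2 - 4.18) * ((s - 0.508378) / 2) - 1) (-0.86664936) (by norm_num) hE
    (by linarith) (by norm_num)
  unfold auxF
  linarith

lemma auxF_1 (s : ℝ) (_h0 : 0.52844219256 ≤ s) (_h1 : s ≤ 0.52844219257) : 0 < auxF s 4.19 := by
  have hE : Real.exp (s * 4.19) ≤ 9.153836 := by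
    apply exp_upper_aux _ 0.27677159836 _ (by norm_num) (by norm_num) (by linarith)
    norm_num [Finset.sum_range_succ, Nat.factorial]
  have h := mul_lower_aux _ 9.153836 ((4.19 ^ 2 - 4.19) * ((s - 0.508378) / 2) - 1) (-0.86591000)
    (Real.exp_pos _).le hE (by linarith) (by norm_num)
  unfold auxF
  linarith

lemma auxF_2 (s : ℝ) (_h0 : 0.52844219256 ≤ s) (_h1 : s ≤ 0.52844219257) : 0 < auxF s 5.76 := by
  have hE : Real.exp (s * 5.76) ≤ 20.985404 := by
    apply exp_upper_aux _ 0.38047837866 _ (by norm_num) (by norm_num) (by linarith)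
    norm_num [Finset.sum_range_succ, Nat.factorial]
  have h := mul_lower_aux _ 20.985404 ((5.76 ^ 2 - 5.76) * ((s - 0.508378) / 2) - 1) (-0.72494400)
    (Real.exp_pos _).le hE (by linarith) (by norm_num)
  unfold auxF
  linarith

lemma auxF_3 (s : ℝ) (_h0 : 0.52844219256 ≤ s) (_h1 : s ≤ 0.52844219257) : auxF s 5.77 < 0 := by
  have hE : 21.096588 ≤ Real.exp (s * 5.77) := by
    apply exp_lower_aux _ 0.38113893138 _ (by norm_num) (by linarith)
    norm_num [Finset.sum_range_succ, Nat.factorial]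
  have h := mul_upper_aux _ 21.096588 ((5.77 ^ 2 - 5.77) * ((s - 0.508378) / 2) - 1) (-0.72388761) (by norm_num) hE
    (by linarith) (by norm_num)
  unfold auxF
  linarith

lemma auxF_4 (s : ℝ) (_h0 : 0.52844219256 ≤ s) (_h1 : s ≤ 0.52844219257) : auxF s 8 < 0 := by
  have hE : 68.548224 ≤ Real.exp (s * 8) := by
    apply exp_lower_aux _ 0.52844219256 _ (by norm_num) (by linarith)
    norm_num [Finset.sum_range_succ, Nat.factorial]
  have h := mul_upper_aux _ 68.548224 ((8 ^ 2 - 8) * ((s - 0.508378) / 2) - 1) (-0.43820260) (by norm_num) hE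
    (by linarith) (by norm_num)
  unfold auxF
  linarith

lemma auxF_5 (s : ℝ) (_h0 : 0.52844219256 ≤ s) (_h1 : s ≤ 0.52844219257) : 0 < auxF s 8.01 := by
  have hE : Real.exp (s * 8.01) ≤ 68.911426 := by
    apply exp_upper_aux _ 0.52910274532 _ (by norm_num) (by norm_num) (by linarith)
    norm_num [Finset.sum_range_succ, Nat.factorial]
  have h := mul_lower_aux _ 68.911426 ((8.01 ^ 2 - 8.01) * ((s - 0.508378) / 2) - 1) (-0.43669680)
    (Real.exp_pos _).le hE (by linarith) (by norm_num)
  unfold auxF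
  linarith



/-- For `σ = √2`, `μ = 0.508378`, `r = 0.00520074`, the equation
`b² − b = (e^{γ₊b} − e^{γ₋b})/(γ₊e^{γ₊b} − γ₋e^{γ₋b})` has at least three distinct
solutions in `(1, ∞)`: one in `(4.18, 4.19)`, one in `(5.76, 5.77)`, one in `(8.00, 8.01)`. -/
theorem stmt9 (σ μ r : ℝ)
    (hσ : σ = Real.sqrt 2) (hμ : μ = 0.508378) (hr : r = 0.00520074)
    (γp γm : ℝ)
    (hγp : γp = (-μ + Real.sqrt (μ ^ 2 + 2 * r * σ ^ 2)) / σ ^ 2)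
    (hγm : γm = (-μ - Real.sqrt (μ ^ 2 + 2 * r * σ ^ 2)) / σ ^ 2) :
    ∃ b₁ ∈ Set.Ioo (4.18 : ℝ) 4.19, ∃ b₂ ∈ Set.Ioo (5.76 : ℝ) 5.77,
      ∃ b₃ ∈ Set.Ioo (8.00 : ℝ) 8.01,
      (b₁ ^ 2 - b₁ = (Real.exp (γp * b₁) - Real.exp (γm * b₁)) /
        (γp * Real.exp (γp * b₁) - γm * Real.exp (γm * b₁))) ∧
      (b₂ ^ 2 - b₂ = (Real.exp (γp * b₂) - Real.exp (γm * b₂)) /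
        (γp * Real.exp (γp * b₂) - γm * Real.exp (γm * b₂))) ∧
      (b₃ ^ 2 - b₃ = (Real.exp (γp * b₃) - Real.exp (γm * b₃)) /
        (γp * Real.exp (γp * b₃) - γm * Real.exp (γm * b₃))) := by
  have hσ2 : σ ^ 2 = 2 := by rw [hσ]; exact Real.sq_sqrt (by norm_num)
  rw [hσ2] at hγp hγm
  set s := Real.sqrt (μ ^ 2 + 2 * r * 2) with hs
  have h0 : 0.52844219256 ≤ s := by
    rw [hs, hμ, hr]; apply Real.le_sqrt_of_sq_le; norm_num
  have h1 : s ≤ 0.52844219257 := by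
    rw [hs, hμ, hr, Real.sqrt_le_left (by norm_num)]; norm_num
  clear_value s
  subst hμ
  have key : ∀ b : ℝ, auxF s b = 0 →
      b ^ 2 - b = (Real.exp (γp * b) - Real.exp (γm * b)) /
        (γp * Real.exp (γp * b) - γm * Real.exp (γm * b)) := by
    intro b hb
    have hp : 0 < γp := by rw [hγp]; linarith
    have hm : γm < 0 := by rw [hγm]; linarith
    have e1 := Real.exp_pos (γp * b)
    have e2 := Real.exp_pos (γm * b)
    have hD : 0 < γp * Real.exp (γp * b) - γm * Real.exp (γm * b) := by nlinarith
    rw [eq_div_iff hD.ne']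
    have hE : Real.exp (γp * b) = Real.exp (γm * b) * Real.exp (s * b) := by
      rw [← Real.exp_add]; congr 1; rw [hγp, hγm]; ring
    rw [hE]
    unfold auxF at hb
    generalize Real.exp (γm * b) = A at *
    rw [hγp, hγm]
    linear_combination A * hb
  obtain ⟨b₁, hb₁, z₁⟩ := intermediate_value_Ioo (by norm_num : (4.18 : ℝ) ≤ 4.19)
    (auxF_cont s).continuousOn ⟨auxF_0 s h0 h1, auxF_1 s h0 h1⟩
  obtain ⟨b₂, hb₂, z₂⟩ := intermediate_value_Ioo' (by norm_num : (5.76 : ℝ) ≤ 5.77)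
    (auxF_cont s).continuousOn ⟨auxF_3 s h0 h1, auxF_2 s h0 h1⟩
  obtain ⟨b₃, hb₃, z₃⟩ := intermediate_value_Ioo (by norm_num : (8 : ℝ) ≤ 8.01)
    (auxF_cont s).continuousOn ⟨auxF_4 s h0 h1, auxF_5 s h0 h1⟩
  refine ⟨b₁, hb₁, b₂, hb₂, b₃, ⟨?_, hb₃.2⟩, key _ z₁, key _ z₂, key _ z₃⟩
  have := hb₃.1
  linarith
end

section
/- Suppose 1 < b₁ < θ < λ, that b₁ satisfies the smooth-fit equation η(b₁)φ''(b₁) = η'(b₁)φ'(b₁), and that (C₁, C₂, D, θ, λ) satisfies the five matching equations: C₁e^{γ₊θ} + C₂e^{γ₋θ} = B + θ − b₁ − log(θ/b₁); C₁γ₊e^{γ₊θ} + C₂γ₋e^{γ₋θ} = 1 − 1/θ; C₁e^{γ₊λ} + C₂e^{γ₋λ} = D; C₁γ₊e^{γ₊λ} + C₂γ₋e^{γ₋λ} = 1 − 1/λ; C₁γ₊²e^{γ₊λ} + C₂γ₋²e^{γ₋λ} = 1/λ². Then the function v* is continuously differentiable on [0,∞) with (v*)'(0) = 0, it is twice continuously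 differentiable on [0,θ) and on (θ,∞), it satisfies ℒv*(x) = 0 for all x ∈ (0,b₁) ∪ (θ,λ), and (v*)'(x) = η(x) for all x ∈ (b₁,θ) ∪ (λ,∞). -/
/-- Two functions glued at `a`. -/
noncomputable def glueAt (a : ℝ) (f g : ℝ → ℝ) (x : ℝ) : ℝ := if x ≤ a then f x else g x

theorem glueAt_le {a x : ℝ} {f g : ℝ → ℝ} (h : x ≤ a) : glueAt a f g x = f x := if_pos h

theorem glueAt_gt {a x : ℝ} {f g : ℝ → ℝ} (h : a < x) : glueAt a f g x = g x :=
  if_neg (not_le.mpr h)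

theorem glueAt_ge {a x : ℝ} {f g : ℝ → ℝ} (h : a ≤ x) (e : x = a → f a = g a) :
    glueAt a f g x = g x := by
  rcases h.lt_or_eq with h | h
  · exact glueAt_gt h
  · subst h; rw [glueAt_le le_rfl, e rfl]

theorem glueAt_evl {a x : ℝ} {f g : ℝ → ℝ} (h : x < a) : glueAt a f g =ᶠ[nhds x] f := by
  filter_upwards [Iio_mem_nhds h] with y hy using glueAt_le (le_of_lt hy)

theorem glueAt_evg {a x : ℝ} {f g : ℝ → ℝ} (h : a < x) : glueAt a f g =ᶠ[nhds x] g := by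
  filter_upwards [Ioi_mem_nhds h] with y hy using glueAt_gt hy

theorem glueAt_hasDerivAt {a x : ℝ} {f g f' g' : ℝ → ℝ}
    (hf : x ≤ a → HasDerivAt f (f' x) x) (hg : a ≤ x → HasDerivAt g (g' x) x)
    (e : x = a → f a = g a) (e' : x = a → f' a = g' a) :
    HasDerivAt (glueAt a f g) (glueAt a f' g' x) x := by
  rcases lt_trichotomy x a with h | h | h
  · rw [glueAt_le h.le]
    exact (hf h.le).congr_of_eventuallyEq (glueAt_evl h)
  · subst h
    have h1 : HasDerivWithinAt (glueAt x f g) (f' x) (Set.Iic x) x :=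
      (hf le_rfl).hasDerivWithinAt.congr (fun y hy => glueAt_le hy) (glueAt_le le_rfl)
    have h2 : HasDerivWithinAt (glueAt x f g) (f' x) (Set.Ici x) x := by
      rw [e' rfl]
      exact (hg le_rfl).hasDerivWithinAt.congr (fun y hy => glueAt_ge hy (fun _ => e rfl))
        (glueAt_ge le_rfl e)
    have h3 := h1.union h2
    rw [Set.Iic_union_Ici, hasDerivWithinAt_univ] at h3
    rwa [glueAt_le le_rfl]
  · rw [glueAt_gt h]
    exact (hg h.le).congr_of_eventuallyEq (glueAt_evg h)

theorem glueAt_continuousAt {a x : ℝ} {f g : ℝ → ℝ}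
    (hf : x ≤ a → ContinuousAt f x) (hg : a ≤ x → ContinuousAt g x)
    (e : x = a → f a = g a) : ContinuousAt (glueAt a f g) x := by
  rcases lt_trichotomy x a with h | h | h
  · exact (hf h.le).congr (glueAt_evl h).symm
  · subst h
    have h1 : ContinuousWithinAt (glueAt x f g) (Set.Iic x) x :=
      (hf le_rfl).continuousWithinAt.congr (fun y hy => glueAt_le hy) (glueAt_le le_rfl)
    have h2 : ContinuousWithinAt (glueAt x f g) (Set.Ici x) x :=
      (hg le_rfl).continuousWithinAt.congr (fun y hy => glueAt_ge hy (fun _ => e rfl))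
        (glueAt_ge le_rfl e)
    have h3 := h1.union h2
    rwa [Set.Iic_union_Ici, continuousWithinAt_univ] at h3
  · exact (hg h.le).congr (glueAt_evg h).symm

theorem contDiffOn_step {U : Set ℝ} (hU : IsOpen U) {V W : ℝ → ℝ} (n : ℕ)
    (h : ∀ x ∈ U, HasDerivAt V (W x) x) (hW : ContDiffOn ℝ n W U) :
    ContDiffOn ℝ (n + 1) V U := by
  rw [contDiffOn_succ_iff_deriv_of_isOpen hU]
  refine ⟨fun x hx => (h x hx).differentiableAt.differentiableWithinAt, by simp, ?_⟩
  exact hW.congr (fun x hx => (h x hx).deriv)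

theorem hasDerivAt_expmul (c x : ℝ) :
    HasDerivAt (fun x => Real.exp (c * x)) (c * Real.exp (c * x)) x := by
  have := ((hasDerivAt_id x).const_mul c).exp
  simpa [mul_comm] using this

theorem hasDerivAt_linlog (K b x : ℝ) (hb : 0 < b) (hx : 0 < x) :
    HasDerivAt (fun x => K + x - b - Real.log (x / b)) (1 - 1 / x) x := by
  have h1 : HasDerivAt (fun x : ℝ => x / b) (1 / b) x := (hasDerivAt_id x).div_const b
  have h2 := (((hasDerivAt_id x).const_add K).sub_const b).sub (h1.log (by positivity))
  refine h2.congr_deriv ?_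
  field_simp

theorem hasDerivAt_oneinv (x : ℝ) (hx : 0 < x) :
    HasDerivAt (fun x : ℝ => 1 - 1 / x) (1 / x ^ 2) x := by
  have := (hasDerivAt_inv hx.ne').const_sub 1
  simpa using this

/-- Under the smooth-fit equation at `b₁` and the five matching equations at `θ` and `λ`,
the candidate value function `v*` is `C¹` on `[0,∞)` with `(v*)'(0) = 0`, it is `C²` on
`[0,θ)` and on `(θ,∞)`, it satisfies `ℒv* = 0` on `(0,b₁) ∪ (θ,λ)` and `(v*)' = η` on
`(b₁,θ) ∪ (λ,∞)`. -/
theorem stmt10 (μ σ r : ℝ) (hσ : 0 < σ) (hr : 0 < r)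
    (γp γm : ℝ)
    (hγp : γp = (-μ + Real.sqrt (μ ^ 2 + 2 * r * σ ^ 2)) / σ ^ 2)
    (hγm : γm = (-μ - Real.sqrt (μ ^ 2 + 2 * r * σ ^ 2)) / σ ^ 2)
    (φ : ℝ → ℝ)
    (hφ : ∀ x, φ x = Real.exp (γp * x) / γp - Real.exp (γm * x) / γm)
    (η : ℝ → ℝ)
    (hη : ∀ x, η x = if 0 < x then max (1 - 1 / x) 0 else 0)
    (b₁ θ lam C₁ C₂ D A B : ℝ)
    (hb₁ : 1 < b₁) (hθ : b₁ < θ) (hlam : θ < lam)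
    (hA : A = η b₁ / deriv φ b₁) (hB : B = A * φ b₁)
    (hfit : η b₁ * deriv (deriv φ) b₁ = deriv η b₁ * deriv φ b₁)
    (heq1 : C₁ * Real.exp (γp * θ) + C₂ * Real.exp (γm * θ) =
      B + θ - b₁ - Real.log (θ / b₁))
    (heq2 : C₁ * γp * Real.exp (γp * θ) + C₂ * γm * Real.exp (γm * θ) = 1 - 1 / θ)
    (heq3 : C₁ * Real.exp (γp * lam) + C₂ * Real.exp (γm * lam) = D)
    (heq4 : C₁ * γp * Real.exp (γp * lam) + C₂ * γm * Real.exp (γm * lam) = 1 - 1 / lam)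
    (heq5 : C₁ * γp ^ 2 * Real.exp (γp * lam) + C₂ * γm ^ 2 * Real.exp (γm * lam) =
      1 / lam ^ 2)
    (vstar : ℝ → ℝ)
    (hv1 : ∀ x ∈ Set.Icc 0 b₁, vstar x = A * φ x)
    (hv2 : ∀ x ∈ Set.Ioc b₁ θ, vstar x = B + x - b₁ - Real.log (x / b₁))
    (hv3 : ∀ x ∈ Set.Ioc θ lam,
      vstar x = C₁ * Real.exp (γp * x) + C₂ * Real.exp (γm * x))
    (hv4 : ∀ x ∈ Set.Ioi lam, vstar x = D + ∫ u in lam..x, η u) :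
    ContDiffOn ℝ 1 vstar (Set.Ici 0) ∧
    derivWithin vstar (Set.Ici 0) 0 = 0 ∧
    ContDiffOn ℝ 2 vstar (Set.Ico 0 θ) ∧
    ContDiffOn ℝ 2 vstar (Set.Ioi θ) ∧
    (∀ x ∈ Set.Ioo 0 b₁ ∪ Set.Ioo θ lam,
      -r * vstar x + μ * deriv vstar x + σ ^ 2 / 2 * deriv (deriv vstar) x = 0) ∧
    (∀ x ∈ Set.Ioo b₁ θ ∪ Set.Ioi lam, deriv vstar x = η x) := by
  have hs2 : Real.sqrt (μ ^ 2 + 2 * r * σ ^ 2) ^ 2 = μ ^ 2 + 2 * r * σ ^ 2 :=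
    Real.sq_sqrt (by positivity)
  have hspos : 0 < Real.sqrt (μ ^ 2 + 2 * r * σ ^ 2) := Real.sqrt_pos.mpr (by positivity)
  set s := Real.sqrt (μ ^ 2 + 2 * r * σ ^ 2) with hs
  have hrp : -r + μ * γp + σ ^ 2 / 2 * γp ^ 2 = 0 := by
    rw [hγp]; field_simp; linear_combination hs2
  have hrm : -r + μ * γm + σ ^ 2 / 2 * γm ^ 2 = 0 := by
    rw [hγm]; field_simp; linear_combination hs2
  have hp0 : γp ≠ 0 := by rintro h; rw [h] at hrp; apply hr.ne'; linarith
  have hm0 : γm ≠ 0 := by rintro h; rw [h] at hrm; apply hr.ne'; linarith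
  have hlt : γm < γp := by
    rw [hγp, hγm]; apply div_lt_div_of_pos_right _ (by positivity); linarith
  clear hγp hγm
  have hb0 : 0 < b₁ := by linarith
  have hθ0 : 0 < θ := by linarith
  have hl0 : 0 < lam := by linarith
  -- derivatives of φ
  have dφ : ∀ x, HasDerivAt φ (Real.exp (γp * x) - Real.exp (γm * x)) x := by
    intro x
    rw [funext hφ]
    refine (((hasDerivAt_expmul γp x).div_const γp).sub
      ((hasDerivAt_expmul γm x).div_const γm)).congr_deriv ?_
    field_simp
  have ddφ : ∀ x, HasDerivAt (fun x => Real.exp (γp * x) - Real.exp (γm * x))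
      (γp * Real.exp (γp * x) - γm * Real.exp (γm * x)) x := fun x =>
    (hasDerivAt_expmul γp x).sub (hasDerivAt_expmul γm x)
  have eφ : deriv φ = fun x => Real.exp (γp * x) - Real.exp (γm * x) :=
    funext fun x => (dφ x).deriv
  have eφ2 : deriv (deriv φ) b₁ = γp * Real.exp (γp * b₁) - γm * Real.exp (γm * b₁) := by
    rw [eφ]; exact (ddφ b₁).deriv
  have hφpos : 0 < Real.exp (γp * b₁) - Real.exp (γm * b₁) := by
    rw [sub_pos]; apply Real.exp_lt_exp.mpr; exact mul_lt_mul_of_pos_right hlt hb0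
  -- η
  have hη1 : ∀ x, 1 < x → η x = 1 - 1 / x := by
    intro x hx
    rw [hη, if_pos (by linarith), max_eq_left]
    rw [sub_nonneg, div_le_one (by linarith)]; exact hx.le
  have hdη : deriv η b₁ = 1 / b₁ ^ 2 := by
    have : η =ᶠ[nhds b₁] fun x => 1 - 1 / x := by
      filter_upwards [Ioi_mem_nhds hb₁] with y hy using hη1 y hy
    rw [this.deriv_eq]; exact (hasDerivAt_oneinv b₁ hb0).deriv
  have hint : ∀ x, lam < x → ∫ u in lam..x, η u = x - lam - Real.log (x / lam) := by
    intro x hx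
    have hI : Set.uIcc lam x = Set.Icc lam x := Set.uIcc_of_le hx.le
    have h1 : ∀ u ∈ Set.uIcc lam x, η u = 1 - 1 / u := fun u hu => by
      rw [hI] at hu; exact hη1 u (by linarith [hu.1])
    rw [intervalIntegral.integral_congr (g := fun u => 1 - 1 / u) h1]
    rw [intervalIntegral.integral_eq_sub_of_hasDerivAt
      (f := fun x => 0 + x - lam - Real.log (x / lam))]
    · simp [div_self hl0.ne']
    · intro u hu; rw [hI] at hu; exact hasDerivAt_linlog 0 lam u hl0 (by linarith [hu.1])
    · apply ContinuousOn.intervalIntegrable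
      intro u hu; rw [hI] at hu
      exact (hasDerivAt_oneinv u (by linarith [hu.1])).continuousAt.continuousWithinAt
  -- smooth fit
  have hA1 : A * (Real.exp (γp * b₁) - Real.exp (γm * b₁)) = 1 - 1 / b₁ := by
    rw [hA, eφ, hη1 b₁ hb₁]; exact div_mul_cancel₀ _ hφpos.ne'
  have hA2 : A * (γp * Real.exp (γp * b₁) - γm * Real.exp (γm * b₁)) = 1 / b₁ ^ 2 := by
    rw [eφ2, hdη, eφ, hη1 b₁ hb₁, ← hA1] at hfit
    apply mul_right_cancel₀ hφpos.ne'
    linear_combination hfit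
  -- the pieces
  obtain ⟨q, hq⟩ : ∃ q : ℝ → ℝ, q = fun x =>
    C₁ * Real.exp (γp * x) + C₂ * Real.exp (γm * x) := ⟨_, rfl⟩
  obtain ⟨q1, hq1⟩ : ∃ q : ℝ → ℝ, q = fun x =>
    C₁ * γp * Real.exp (γp * x) + C₂ * γm * Real.exp (γm * x) := ⟨_, rfl⟩
  obtain ⟨q2, hq2⟩ : ∃ q : ℝ → ℝ, q = fun x =>
    C₁ * γp ^ 2 * Real.exp (γp * x) + C₂ * γm ^ 2 * Real.exp (γm * x) := ⟨_, rfl⟩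
  obtain ⟨f, hf⟩ : ∃ f : ℝ → ℝ, f = fun x => A * φ x := ⟨_, rfl⟩
  obtain ⟨f1, hf1⟩ : ∃ f : ℝ → ℝ, f = fun x =>
    A * (Real.exp (γp * x) - Real.exp (γm * x)) := ⟨_, rfl⟩
  obtain ⟨f2, hf2⟩ : ∃ f : ℝ → ℝ, f = fun x =>
    A * (γp * Real.exp (γp * x) - γm * Real.exp (γm * x)) := ⟨_, rfl⟩
  obtain ⟨p, hp⟩ : ∃ p : ℝ → ℝ, p = fun x => B + x - b₁ - Real.log (x / b₁) := ⟨_, rfl⟩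
  obtain ⟨k, hk⟩ : ∃ p : ℝ → ℝ, p = fun x => D + x - lam - Real.log (x / lam) := ⟨_, rfl⟩
  obtain ⟨w, hw⟩ : ∃ p : ℝ → ℝ, p = fun x => 1 - 1 / x := ⟨_, rfl⟩
  obtain ⟨z, hz⟩ : ∃ p : ℝ → ℝ, p = fun x => 1 / x ^ 2 := ⟨_, rfl⟩
  have dq : ∀ x, HasDerivAt q (q1 x) x := fun x => by
    rw [hq, hq1]
    refine (((hasDerivAt_expmul γp x).const_mul C₁).add
      ((hasDerivAt_expmul γm x).const_mul C₂)).congr_deriv ?_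
    ring
  have dq1 : ∀ x, HasDerivAt q1 (q2 x) x := fun x => by
    rw [hq1, hq2]
    refine (((hasDerivAt_expmul γp x).const_mul (C₁ * γp)).add
      ((hasDerivAt_expmul γm x).const_mul (C₂ * γm))).congr_deriv ?_
    ring
  have cq2 : Continuous q2 := by rw [hq2]; fun_prop
  have df : ∀ x, HasDerivAt f (f1 x) x := fun x => by
    rw [hf, hf1]; exact (dφ x).const_mul A
  have df1 : ∀ x, HasDerivAt f1 (f2 x) x := fun x => by
    rw [hf1, hf2]; exact (ddφ x).const_mul A
  have cf2 : Continuous f2 := by rw [hf2]; fun_prop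
  have dp : ∀ x, 0 < x → HasDerivAt p (w x) x := fun x hx => by
    rw [hp, hw]; exact hasDerivAt_linlog B b₁ x hb0 hx
  have dk : ∀ x, 0 < x → HasDerivAt k (w x) x := fun x hx => by
    rw [hk, hw]; exact hasDerivAt_linlog D lam x hl0 hx
  have dw : ∀ x, 0 < x → HasDerivAt w (z x) x := fun x hx => by
    rw [hw, hz]; exact hasDerivAt_oneinv x hx
  have cz : ∀ x, 0 < x → ContinuousAt z x := fun x hx => by
    rw [hz]; exact continuousAt_const.div (by fun_prop) (by positivity)
  -- matching
  have m1 : f b₁ = p b₁ := by rw [hf, hp]; simp [div_self hb0.ne', hB]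
  have m1' : f1 b₁ = w b₁ := by rw [hf1, hw]; exact hA1
  have m1'' : f2 b₁ = z b₁ := by rw [hf2, hz]; exact hA2
  have m2 : p θ = q θ := by rw [hp, hq]; exact heq1.symm
  have m2' : w θ = q1 θ := by rw [hw, hq1]; exact heq2.symm
  have m3 : q lam = k lam := by
    rw [hq, hk]; simp only [div_self hl0.ne', Real.log_one]; linarith
  have m3' : q1 lam = w lam := by rw [hq1, hw]; exact heq4
  have m3'' : q2 lam = z lam := by rw [hq2, hz]; exact heq5
  -- glued functions
  obtain ⟨V, hV⟩ : ∃ V, V = glueAt b₁ f (glueAt θ p (glueAt lam q k)) := ⟨_, rfl⟩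
  obtain ⟨W, hW⟩ : ∃ V, V = glueAt b₁ f1 (glueAt θ w (glueAt lam q1 w)) := ⟨_, rfl⟩
  obtain ⟨Z, hZ⟩ : ∃ V, V = glueAt b₁ f2 (glueAt θ z (glueAt lam q2 z)) := ⟨_, rfl⟩
  have dV : ∀ x, HasDerivAt V (W x) x := by
    intro x; rw [hV, hW]
    refine glueAt_hasDerivAt (fun _ => df x) (fun h => ?_) (fun _ => ?_) (fun _ => ?_)
    · refine glueAt_hasDerivAt (fun _ => dp x (by linarith)) (fun h => ?_) (fun _ => ?_)
        (fun _ => ?_)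
      · exact glueAt_hasDerivAt (fun _ => dq x) (fun h => dk x (by linarith)) (fun _ => m3)
          (fun _ => m3')
      · rw [glueAt_le hlam.le, m2]
      · rw [glueAt_le hlam.le, m2']
    · rw [glueAt_le hθ.le, m1]
    · rw [glueAt_le hθ.le, m1']
  have dW : ∀ x, x ≠ θ → HasDerivAt W (Z x) x := by
    intro x hx; rw [hW, hZ]
    refine glueAt_hasDerivAt (fun _ => df1 x) (fun h => ?_) (fun _ => ?_) (fun _ => ?_)
    · refine glueAt_hasDerivAt (fun _ => dw x (by linarith)) (fun h => ?_)
        (fun h => absurd h hx) (fun h => absurd h hx)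
      exact glueAt_hasDerivAt (fun _ => dq1 x) (fun h => dw x (by linarith)) (fun _ => m3')
          (fun _ => m3'')
    · rw [glueAt_le hθ.le, m1']
    · rw [glueAt_le hθ.le, m1'']
  have cW : Continuous W := by
    rw [continuous_iff_continuousAt]
    intro x; rw [hW]
    refine glueAt_continuousAt (fun _ => (df1 x).continuousAt) (fun h => ?_) (fun _ => ?_)
    · refine glueAt_continuousAt (fun _ => (dw x (by linarith)).continuousAt) (fun h => ?_)
        (fun _ => ?_)
      · exact glueAt_continuousAt (fun _ => (dq1 x).continuousAt)
          (fun h => (dw x (by linarith)).continuousAt) (fun _ => m3')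
      · rw [glueAt_le hlam.le, m2']
    · rw [glueAt_le hθ.le, m1']
  have cZ : ∀ x, x ≠ θ → ContinuousAt Z x := by
    intro x hx; rw [hZ]
    refine glueAt_continuousAt (fun _ => cf2.continuousAt) (fun h => ?_) (fun _ => ?_)
    · refine glueAt_continuousAt (fun _ => cz x (by linarith)) (fun h => ?_)
        (fun h => absurd h hx)
      exact glueAt_continuousAt (fun _ => cq2.continuousAt)
          (fun h => cz x (by linarith)) (fun _ => m3'')
    · rw [glueAt_le hθ.le, m1'']
  have hvV : ∀ x, 0 ≤ x → vstar x = V x := by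
    intro x hx; rw [hV]
    by_cases h1 : x ≤ b₁
    · rw [glueAt_le h1, hv1 x ⟨hx, h1⟩, hf]
    rw [not_le] at h1
    rw [glueAt_gt h1]
    by_cases h2 : x ≤ θ
    · rw [glueAt_le h2, hv2 x ⟨h1, h2⟩, hp]
    rw [not_le] at h2
    rw [glueAt_gt h2]
    by_cases h3 : x ≤ lam
    · rw [glueAt_le h3, hv3 x ⟨h2, h3⟩, hq]
    rw [not_le] at h3
    rw [glueAt_gt h3, hv4 x h3, hk, hint x h3]
    ring
  have hdv : ∀ x, 0 < x → HasDerivAt vstar (W x) x := by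
    intro x hx
    refine (dV x).congr_of_eventuallyEq ?_
    filter_upwards [Ioi_mem_nhds hx] with y hy using hvV y (le_of_lt hy)
  have hddv : ∀ x, 0 < x → x ≠ θ → deriv (deriv vstar) x = Z x := by
    intro x hx hxθ
    refine ((dW x hxθ).congr_of_eventuallyEq ?_).deriv
    filter_upwards [Ioi_mem_nhds hx] with y hy using (hdv y hy).deriv
  have C2 : ∀ U : Set ℝ, IsOpen U → (∀ x ∈ U, x ≠ θ) → ContDiffOn ℝ 2 V U := by
    intro U hU hne
    have h0 : ContDiffOn ℝ (0 : ℕ) Z U := by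
      simp only [Nat.cast_zero, contDiffOn_zero]
      exact fun x hx => (cZ x (hne x hx)).continuousWithinAt
    have h1 := contDiffOn_step hU 0 (fun x hx => dW x (hne x hx)) h0
    have h2 := contDiffOn_step hU (V := V) (W := W) 1 (fun x hx => dV x) (by simpa using h1)
    have e : ((1 : ℕ) : WithTop ℕ∞) + 1 = 2 := by norm_num
    rwa [e] at h2
  refine ⟨?_, ?_, ?_, ?_, ?_, ?_⟩
  · have h0 : ContDiffOn ℝ (0 : ℕ) W Set.univ := by
      simp only [Nat.cast_zero, contDiffOn_zero]
      exact cW.continuousOn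
    have h1 := contDiffOn_step isOpen_univ 0 (fun x _ => dV x) h0
    have h2 : ContDiffOn ℝ 1 V Set.univ := by simpa using h1
    exact (h2.mono (Set.subset_univ _)).congr (fun x hx => hvV x hx)
  · have h1 : HasDerivWithinAt vstar (W 0) (Set.Ici 0) 0 :=
      (dV 0).hasDerivWithinAt.congr (fun x hx => hvV x hx) (hvV 0 le_rfl)
    rw [h1.derivWithin (uniqueDiffOn_Ici 0 0 (by simp)), hW, glueAt_le hb0.le, hf1]
    simp
  · exact ((C2 (Set.Iio θ) isOpen_Iio (fun x hx => ne_of_lt hx)).mono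
      (fun x hx => hx.2)).congr (fun x hx => hvV x hx.1)
  · exact (C2 (Set.Ioi θ) isOpen_Ioi (fun x hx => ne_of_gt hx)).congr
      (fun x hx => hvV x (hθ0.le.trans (le_of_lt hx)))
  · rintro x (⟨h0, h1⟩ | ⟨h0, h1⟩)
    · rw [hddv x h0 (by linarith : x < θ).ne, (hdv x h0).deriv, hvV x h0.le, hV, hW, hZ,
        glueAt_le h1.le, glueAt_le h1.le, glueAt_le h1.le, hf, hf1, hf2]
      simp only [hφ]
      have e1 : Real.exp (γp * x) = γp * (Real.exp (γp * x) / γp) := by field_simp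
      have e2 : Real.exp (γm * x) = γm * (Real.exp (γm * x) / γm) := by field_simp
      generalize Real.exp (γp * x) / γp = a at *
      generalize Real.exp (γm * x) / γm = b at *
      rw [e1, e2]
      linear_combination A * a * hrp - A * b * hrm
    · have hx : 0 < x := by linarith
      have hbx : b₁ < x := by linarith
      rw [hddv x hx (ne_of_gt h0), (hdv x hx).deriv, hvV x hx.le, hV, hW, hZ]
      simp only [glueAt_gt hbx, glueAt_gt h0, glueAt_le h1.le]
      rw [hq, hq1, hq2]
      linear_combination C₁ * Real.exp (γp * x) * hrp + C₂ * Real.exp (γm * x) * hrm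
  · rintro x (⟨h0, h1⟩ | h0)
    · rw [(hdv x (by linarith)).deriv, hη1 x (by linarith), hW, glueAt_gt h0, glueAt_le h1.le,
        hw]
    · have h0' : lam < x := h0
      rw [(hdv x (by linarith)).deriv, hη1 x (by linarith), hW, glueAt_gt (by linarith),
        glueAt_gt (by linarith), glueAt_gt h0', hw]
end

section
/- For the parameter values σ = √2, μ = 0.508378, r = 0.00520074, and for any b₁ ∈ (4.18, 4.19) satisfying the smooth-fit equation b₁² − b₁ = (e^{γ₊b₁} − e^{γ₋b₁})/(γ₊e^{γ₊b₁} − γ₋e^{γ₋b₁}), there exist real constants C₁, C₂, D and thresholds θ, λ with b₁ < θ < λ, θ ∈ (4.84, 4.85) and λ ∈ (7.95, 7.96), satisfying the five matching equations: C₁e^{γ₊θ} + C₂e^{γ₋θ} = B + θ − b₁ − log(θ/b₁); C₁γ₊e^{γ₊θ} + C₂γ₋e^{γ₋θ} = 1 − 1/θ; C₁e^{γ₊λ} + C₂e^{γ₋λ} = D; C₁γ₊e^{γ₊λ} + C₂γ₋e^{γ₋λ} = 1 − 1/λ; C₁γ₊²e^{γ₊λ} + C₂γ₋²e^{γ₋λ}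 = 1/λ². -/
lemma gam_bounds (s : ℝ) (hs : s = Real.sqrt (0.508378 ^ 2 + 0.02080296)) :
    (0.52844219256603649 : ℝ) < s ∧ s < 0.52844219256603650 := by
  rw [hs]
  constructor
  · apply Real.lt_sqrt_of_sq_lt; norm_num
  · rw [Real.sqrt_lt' (by norm_num)]; norm_num

lemma exp_lo (x y : ℝ) (hx : |x / 4| ≤ 1) (hy : 0 ≤ y)
    (h : y ≤ ∑ m ∈ Finset.range 16, (x / 4) ^ m / m.factorial
      - (x / 4) ^ 16 * (17 / ((Nat.factorial 16 : ℝ) * 16))) : y ^ 4 ≤ Real.exp x := by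
  have h1 := abs_le.1 (Real.exp_bound hx (n := 16) (by norm_num))
  rw [Even.pow_abs (by decide)] at h1
  have e : Real.exp x = Real.exp (x / 4) ^ 4 := by
    rw [← Real.exp_nat_mul]; congr 1; push_cast; ring
  rw [e]
  apply pow_le_pow_left₀ hy
  have := h1.1
  norm_num only at this h ⊢
  linarith

lemma exp_hi (x y : ℝ) (hx : |x / 4| ≤ 1)
    (h : ∑ m ∈ Finset.range 16, (x / 4) ^ m / m.factorial
      + (x / 4) ^ 16 * (17 / ((Nat.factorial 16 : ℝ) * 16)) ≤ y) : Real.exp x ≤ y ^ 4 := by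
  have h1 := abs_le.1 (Real.exp_bound hx (n := 16) (by norm_num))
  rw [Even.pow_abs (by decide)] at h1
  have e : Real.exp x = Real.exp (x / 4) ^ 4 := by
    rw [← Real.exp_nat_mul]; congr 1; push_cast; ring
  rw [e]
  apply pow_le_pow_left₀ (Real.exp_pos _).le
  have := h1.2
  norm_num only at this h ⊢
  linarith

lemma Ep_bL : (1.04284025983170 : ℝ) ≤ Real.exp 0.04194800976551569 := by
  have h := exp_lo 0.04194800976551569 1.010542183778394422 (by norm_num [abs_le]) (by norm_num)
    (by norm_num [Finset.sum_range_succ, Nat.factorial])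
  refine le_trans ?_ h
  norm_num

lemma Em_bL : Real.exp (-2.16766976391891569) ≤ (0.11444398794659 : ℝ) := by
  have h := exp_hi (-2.16766976391891569) 0.581631937569916588 (by norm_num [abs_le])
    (by norm_num [Finset.sum_range_succ, Nat.factorial])
  refine le_trans h ?_
  norm_num

lemma Ep_bH : Real.exp 0.04194801076872537 ≤ (1.04284026087790 : ℝ) := by
  have h := exp_hi 0.04194801076872537 1.010542184031841050 (by norm_num [abs_le])
    (by norm_num [Finset.sum_range_succ, Nat.factorial])
  refine le_trans h ?_
  norm_num

lemma Em_bH : (0.11444398201368 : ℝ) ≤ Real.exp (-2.16766981575992537) := by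
  have h := exp_lo (-2.16766981575992537) 0.581631930031819793 (by norm_num [abs_le]) (by norm_num)
    (by norm_num [Finset.sum_range_succ, Nat.factorial])
  refine le_trans ?_ h
  norm_num

lemma Ep_1 : Real.exp 0.03112086684243941 ≤ (1.031610183818 : ℝ) := by
  have h := exp_hi 0.03112086684243941 1.007810561241267916 (by norm_num [abs_le])
    (by norm_num [Finset.sum_range_succ, Nat.factorial])
  refine le_trans h ?_
  norm_num

lemma Ep_2 : (1.031595695020 : ℝ) ≤ Real.exp 0.03110682190764314 := by
  have h := exp_lo 0.03110682190764314 1.007807022589075328 (by norm_num [abs_le]) (by norm_num)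
    (by norm_num [Finset.sum_range_succ, Nat.factorial])
  refine le_trans ?_ h
  norm_num

lemma Em_3 : Real.exp (-1.60822735299206767) ≤ (0.200242258494 : ℝ) := by
  have h := exp_hi (-1.60822735299206767) 0.668942723077384300 (by norm_num [abs_le])
    (by norm_num [Finset.sum_range_succ, Nat.factorial])
  refine le_trans h ?_
  norm_num

lemma Em_4 : (0.200408419568 : ℝ) ≤ Real.exp (-1.60739789683801488) := by
  have h := exp_lo (-1.60739789683801488) 0.669081452125186202 (by norm_num [abs_le]) (by norm_num)
    (by norm_num [Finset.sum_range_succ, Nat.factorial])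
  refine le_trans ?_ h
  norm_num

lemma lg_bL : Real.exp 1.4306414073 ≤ (4.1813803 : ℝ) := by
  have h := exp_hi 1.4306414073 1.429979847943049618 (by norm_num [abs_le])
    (by norm_num [Finset.sum_range_succ, Nat.factorial])
  refine le_trans h ?_
  norm_num

lemma lg_bH : (4.1813804 : ℝ) ≤ Real.exp 1.4306414313 := by
  have h := exp_lo 1.4306414313 1.429979856522928445 (by norm_num [abs_le]) (by norm_num)
    (by norm_num [Finset.sum_range_succ, Nat.factorial])
  refine le_trans ?_ h
  norm_num

lemma lg_t0 : Real.exp 1.5785662487 ≤ (4.848 : ℝ) := by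
  have h := exp_hi 1.5785662487 1.483852226823778574 (by norm_num [abs_le])
    (by norm_num [Finset.sum_range_succ, Nat.factorial])
  refine le_trans h ?_
  norm_num

lemma lg_t1 : (4.8495 : ℝ) ≤ Real.exp 1.5788756069 := by
  have h := exp_lo 1.5788756069 1.483966991725143034 (by norm_num [abs_le]) (by norm_num)
    (by norm_num [Finset.sum_range_succ, Nat.factorial])
  refine le_trans ?_ h
  norm_num

lemma Ep_c : Real.exp 0.05 ≤ (1.06 : ℝ) := by
  have h := exp_hi 0.05 1.012578451540634478 (by norm_num [abs_le])
    (by norm_num [Finset.sum_range_succ, Nat.factorial])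
  refine le_trans h ?_
  norm_num

lemma Em_c : Real.exp (-2.16) ≤ (0.12 : ℝ) := by
  have h := exp_hi (-2.16) 0.582748252373989724 (by norm_num [abs_le])
    (by norm_num [Finset.sum_range_succ, Nat.factorial])
  refine le_trans h ?_
  norm_num


lemma hasDerivAt_P (g g' x : ℝ) (hx : x ≠ 0) (h1 : g + g' = -0.508378)
    (h2 : g * g' = -0.00520074) :
    HasDerivAt (fun x : ℝ => ((x⁻¹) ^ 2 - g' * (1 - x⁻¹)) * Real.exp (-g * x))
      (Real.exp (-g * x) * (-2 * (x⁻¹) ^ 3 + 0.508378 * (x⁻¹) ^ 2 - 0.00520074 * (1 - x⁻¹))) x := by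
  have hi := hasDerivAt_inv hx
  have he : HasDerivAt (fun x : ℝ => Real.exp (-g * x)) (Real.exp (-g * x) * (-g * 1)) x :=
    ((hasDerivAt_id x).const_mul (-g)).exp
  have h := ((hi.pow 2).sub ((hi.const_sub 1).const_mul g')).mul he
  refine h.congr_deriv ?_
  have e : (x ^ 2)⁻¹ = (x⁻¹) ^ 2 := by rw [inv_pow]
  simp only [e, Pi.pow_apply, Pi.sub_apply]
  push_cast
  have hg : 0.508378 = -(g + g') := by linarith
  have hg2 : 0.00520074 = -(g * g') := by linarith
  rw [hg, hg2]
  ring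

lemma hasDerivAt_Q (W g g' x : ℝ) (hx : x ≠ 0) (h1 : g + g' = -0.508378)
    (h2 : g * g' = -0.00520074) :
    HasDerivAt (fun x : ℝ => (W + 0.00520074 * (x - Real.log x) - 0.508378 * (1 - x⁻¹)
        - g' * (1 - x⁻¹)) * Real.exp (-g * x))
      (Real.exp (-g * x) * (g * ((x⁻¹) ^ 2 -
        (W + 0.00520074 * (x - Real.log x) - 0.508378 * (1 - x⁻¹))))) x := by
  have hi := hasDerivAt_inv hx
  have hl := Real.hasDerivAt_log hx
  have he : HasDerivAt (fun x : ℝ => Real.exp (-g * x)) (Real.exp (-g * x) * (-g * 1)) x :=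
    ((hasDerivAt_id x).const_mul (-g)).exp
  have h := ((((((hasDerivAt_id x).sub hl).const_mul 0.00520074).const_add W).sub
    ((hi.const_sub 1).const_mul 0.508378)).sub ((hi.const_sub 1).const_mul g')).mul he
  refine h.congr_deriv ?_
  have e : (x ^ 2)⁻¹ = (x⁻¹) ^ 2 := by rw [inv_pow]
  simp only [e, Pi.sub_apply, id]
  have hg : 0.508378 = -(g + g') := by linarith
  have hg2 : 0.00520074 = -(g * g') := by linarith
  rw [hg, hg2]
  ring

lemma P_anti (g g' : ℝ) (h1 : g + g' = -0.508378) (h2 : g * g' = -0.00520074) :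
    StrictAntiOn (fun x : ℝ => ((x⁻¹) ^ 2 - g' * (1 - x⁻¹)) * Real.exp (-g * x))
      (Set.Icc 7.95013 7.95023) := by
  apply strictAntiOn_of_deriv_neg (convex_Icc _ _)
  · intro x hx
    have : x ≠ 0 := by have := hx.1; intro h; rw [h] at this; norm_num at this
    exact (hasDerivAt_P g g' x this h1 h2).continuousAt.continuousWithinAt
  · intro x hx
    rw [interior_Icc] at hx
    have hx0 : 0 < x := lt_trans (by norm_num) hx.1
    rw [(hasDerivAt_P g g' x hx0.ne' h1 h2).deriv]
    apply mul_neg_of_pos_of_neg (Real.exp_pos _)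
    have a1 : x⁻¹ < 0.12579 := by
      rw [inv_lt_comm₀ hx0 (by norm_num)]; refine lt_trans ?_ hx.1; norm_num
    have a2 : 0.12578 < x⁻¹ := by
      rw [lt_inv_comm₀ (by norm_num) hx0]; refine lt_trans hx.2 ?_; norm_num
    have b1 : (x⁻¹) ^ 2 < 0.12579 ^ 2 := by gcongr
    have b2 : 0.12578 ^ 3 < (x⁻¹) ^ 3 := by gcongr
    norm_num at b1 b2 a1 a2 ⊢
    linarith

lemma Q_anti (W g g' : ℝ) (hg : 0 < g) (h1 : g + g' = -0.508378) (h2 : g * g' = -0.00520074)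
    (hW : 0.429686 < W) :
    StrictAntiOn (fun x : ℝ => (W + 0.00520074 * (x - Real.log x) - 0.508378 * (1 - x⁻¹)
        - g' * (1 - x⁻¹)) * Real.exp (-g * x))
      (Set.Icc 4.848 4.8495) := by
  apply strictAntiOn_of_deriv_neg (convex_Icc _ _)
  · intro x hx
    have : x ≠ 0 := by have := hx.1; intro h; rw [h] at this; norm_num at this
    exact (hasDerivAt_Q W g g' x this h1 h2).continuousAt.continuousWithinAt
  · intro x hx
    rw [interior_Icc] at hx
    have hx0 : 0 < x := lt_trans (by norm_num) hx.1
    rw [(hasDerivAt_Q W g g' x hx0.ne' h1 h2).deriv]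
    apply mul_neg_of_pos_of_neg (Real.exp_pos _)
    apply mul_neg_of_pos_of_neg hg
    have hl : Real.log x ≤ 1.5788756069 := by
      rw [Real.log_le_iff_le_exp hx0]; exact hx.2.le.trans lg_t1
    have a1 : x⁻¹ < 0.20628 := by
      rw [inv_lt_comm₀ hx0 (by norm_num)]; refine lt_trans ?_ hx.1; norm_num
    have a2 : 0.2062 < x⁻¹ := by
      rw [lt_inv_comm₀ (by norm_num) hx0]; refine lt_trans hx.2 ?_; norm_num
    have b1 : (x⁻¹) ^ 2 < 0.20628 ^ 2 := by gcongr
    have := hx.1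
    norm_num at b1 a1 a2 hl this hW ⊢
    linarith

/-- smooth-fit function -/
lemma f_mono (gp gm : ℝ) (hp : 0.01003209628301824 < gp ∧ gp < 0.01003209628301825)
    (hm : -0.51841009628301825 < gm ∧ gm < -0.51841009628301824)
    (h1 : gp + gm = -0.508378) (h2 : gp * gm = -0.00520074) :
    StrictMonoOn (fun b : ℝ => (b ^ 2 - b) * (gp * Real.exp (gp * b) - gm * Real.exp (gm * b))
      - (Real.exp (gp * b) - Real.exp (gm * b))) (Set.Icc 4.18 4.19) := by
  apply strictMonoOn_of_deriv_pos (convex_Icc _ _)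
  · fun_prop
  · intro x hx
    rw [interior_Icc] at hx
    have hep : HasDerivAt (fun x : ℝ => Real.exp (gp * x)) (Real.exp (gp * x) * (gp * 1)) x :=
      ((hasDerivAt_id x).const_mul gp).exp
    have hem : HasDerivAt (fun x : ℝ => Real.exp (gm * x)) (Real.exp (gm * x) * (gm * 1)) x :=
      ((hasDerivAt_id x).const_mul gm).exp
    have hd := ((((hasDerivAt_id x).pow 2).sub (hasDerivAt_id x)).mul
      ((hep.const_mul gp).sub (hem.const_mul gm))).sub (hep.sub hem)
    have hd' : HasDerivAt (fun b : ℝ => (b ^ 2 - b) * (gp * Real.exp (gp * b) - gm * Real.exp (gm * b))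
      - (Real.exp (gp * b) - Real.exp (gm * b)))
      ((gp * Real.exp (gp * x) - gm * Real.exp (gm * x)) * (2 * x - 2 - 0.508378 * (x ^ 2 - x))
        + 0.00520074 * (x ^ 2 - x) * (Real.exp (gp * x) - Real.exp (gm * x))) x := by
      refine hd.congr_deriv ?_
      have hg : 0.508378 = -(gp + gm) := by linarith
      have hg2 : 0.00520074 = -(gp * gm) := by linarith
      rw [hg, hg2]
      simp only [Pi.sub_apply, Pi.pow_apply, id]
      push_cast
      ring
    rw [hd'.deriv]
    have x1 := hx.1
    have x2 := hx.2
    have e1 : Real.exp (gp * x) ≤ 1.06 := by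
      refine le_trans (Real.exp_le_exp.2 ?_) Ep_c
      norm_num at *; nlinarith
    have e2 : Real.exp (gm * x) ≤ 0.12 := by
      refine le_trans (Real.exp_le_exp.2 ?_) Em_c
      norm_num at *; nlinarith
    have e3 : 1.04 ≤ Real.exp (gp * x) := by
      refine le_trans ?_ (Real.add_one_le_exp _)
      norm_num at *; nlinarith
    have e4 := Real.exp_pos (gm * x)
    set p := Real.exp (gp * x)
    set m := Real.exp (gm * x)
    have k1 : gp * p - gm * m ≤ 0.074 := by
      have : gp * p ≤ 0.01004 * 1.06 := by
        apply mul_le_mul (by linarith [hp.2]) e1 (by linarith) (by norm_num)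
      have : (-gm) * m ≤ 0.519 * 0.12 := by
        apply mul_le_mul (by linarith [hm.1]) e2 e4.le (by norm_num)
      norm_num at *; linarith
    have k2 : 0 ≤ gp * p - gm * m := by
      have : 0 ≤ gp * p := mul_nonneg (by linarith [hp.1]) (by linarith)
      have : 0 ≤ (-gm) * m := mul_nonneg (by linarith [hm.2]) e4.le
      linarith
    have k3 : -0.43 ≤ 2 * x - 2 - 0.508378 * (x ^ 2 - x) := by
      norm_num at *; nlinarith
    have k4 : 13.2 ≤ x ^ 2 - x := by norm_num at *; nlinarith
    have k5 : 0.92 ≤ p - m := by norm_num at *; linarith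
    have k6 : 13.2 * 0.92 ≤ (x ^ 2 - x) * (p - m) := by
      apply mul_le_mul k4 k5 (by norm_num) (by linarith)
    have k7 : -0.43 * 0.074 ≤ (gp * p - gm * m) * (2 * x - 2 - 0.508378 * (x ^ 2 - x)) := by
      nlinarith
    norm_num at k6 k7 ⊢
    nlinarith

lemma b_bracket (gp gm b : ℝ) (hp : 0.01003209628301824 < gp ∧ gp < 0.01003209628301825)
    (hm : -0.51841009628301825 < gm ∧ gm < -0.51841009628301824)
    (h1 : gp + gm = -0.508378) (h2 : gp * gm = -0.00520074) (hb : b ∈ Set.Ioo (4.18 : ℝ) 4.19)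
    (hf : (b ^ 2 - b) * (gp * Real.exp (gp * b) - gm * Real.exp (gm * b))
      - (Real.exp (gp * b) - Real.exp (gm * b)) = 0) : 4.1813803 < b ∧ b < 4.1813804 := by
  have mono := f_mono gp gm hp hm h1 h2
  have hbI : b ∈ Set.Icc (4.18 : ℝ) 4.19 := ⟨hb.1.le, hb.2.le⟩
  obtain ⟨hp1, hp2⟩ := hp
  obtain ⟨hm1, hm2⟩ := hm
  constructor
  · rw [← mono.lt_iff_lt (by constructor <;> norm_num) hbI]
    rw [hf]
    have e1 : (1.04284025983170 : ℝ) ≤ Real.exp (gp * 4.1813803) := by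
      refine Ep_bL.trans (Real.exp_le_exp.2 ?_)
      norm_num at *; linarith
    have e2 : Real.exp (gm * 4.1813803) ≤ (0.11444398794659 : ℝ) := by
      refine le_trans (Real.exp_le_exp.2 ?_) Em_bL
      norm_num at *; linarith
    have e4 := Real.exp_pos (gm * 4.1813803)
    set p := Real.exp (gp * 4.1813803)
    set m := Real.exp (gm * 4.1813803)
    have k1 : gp * p ≤ 0.01003209628301825 * p := by
      apply mul_le_mul_of_nonneg_right hp2.le; linarith
    have k2 : -gm * m ≤ 0.51841009628301825 * m := by
      apply mul_le_mul_of_nonneg_right _ e4.le; linarith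
    norm_num at *; linarith
  · rw [← mono.lt_iff_lt hbI (by constructor <;> norm_num)]
    rw [hf]
    have e1 : Real.exp (gp * 4.1813804) ≤ 1.04284026087790 := by
      refine le_trans (Real.exp_le_exp.2 ?_) Ep_bH
      norm_num at *; linarith
    have e2 : (0.11444398201368 : ℝ) ≤ Real.exp (gm * 4.1813804) := by
      refine Em_bH.trans (Real.exp_le_exp.2 ?_)
      norm_num at *; linarith
    have e4 := Real.exp_pos (gp * 4.1813804)
    set p := Real.exp (gp * 4.1813804)
    set m := Real.exp (gm * 4.1813804)
    have k1 : 0.01003209628301824 * p ≤ gp * p := by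
      apply mul_le_mul_of_nonneg_right hp1.le; linarith
    have k2 : 0.51841009628301824 * m ≤ -gm * m := by
      apply mul_le_mul_of_nonneg_right _ (by linarith); linarith
    norm_num at *; linarith

lemma W_bounds (b : ℝ) (h1 : 4.1813803 < b) (h2 : b < 4.1813804) :
    0.429686074 < 0.508378 * (1 - b⁻¹) + (b⁻¹) ^ 2 - 0.00520074 * b + 0.00520074 * Real.log b ∧
    0.508378 * (1 - b⁻¹) + (b⁻¹) ^ 2 - 0.00520074 * b + 0.00520074 * Real.log b
      < 0.429686088 := by
  have hb0 : 0 < b := by linarith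
  have l1 : Real.log b ≤ 1.4306414313 := by
    rw [Real.log_le_iff_le_exp hb0]; exact h2.le.trans lg_bH
  have l2 : 1.4306414073 ≤ Real.log b := by
    rw [Real.le_log_iff_exp_le hb0]; exact lg_bL.trans h1.le
  have a1 : b⁻¹ < 0.2391554770 := by
    rw [inv_lt_comm₀ hb0 (by norm_num)]; refine lt_of_le_of_lt ?_ h1; norm_num
  have a2 : 0.2391554712 < b⁻¹ := by
    rw [lt_inv_comm₀ (by norm_num) hb0]; refine lt_of_lt_of_le h2 ?_; norm_num
  have b1 : (b⁻¹) ^ 2 < 0.2391554770 ^ 2 := by gcongr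
  have b2 : 0.2391554712 ^ 2 < (b⁻¹) ^ 2 := by gcongr
  norm_num at *
  constructor <;> linarith

lemma cmp_hi (a c g l t E : ℝ) (hE : Real.exp (g * (l - t)) ≤ E) (hc : 0 ≤ c) (h : c * E < a) :
    c * Real.exp (-g * t) < a * Real.exp (-g * l) := by
  have e : Real.exp (-g * t) = Real.exp (g * (l - t)) * Real.exp (-g * l) := by
    rw [← Real.exp_add]; congr 1; ring
  rw [e, ← mul_assoc]
  apply mul_lt_mul_of_pos_right _ (Real.exp_pos _)
  exact lt_of_le_of_lt (mul_le_mul_of_nonneg_left hE hc) h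

lemma cmp_lo (a c g l t E : ℝ) (hE : E ≤ Real.exp (g * (l - t))) (hc : 0 ≤ c) (h : a < c * E) :
    a * Real.exp (-g * l) < c * Real.exp (-g * t) := by
  have e : Real.exp (-g * t) = Real.exp (g * (l - t)) * Real.exp (-g * l) := by
    rw [← Real.exp_add]; congr 1; ring
  rw [e, ← mul_assoc]
  apply mul_lt_mul_of_pos_right _ (Real.exp_pos _)
  exact lt_of_lt_of_le h (mul_le_mul_of_nonneg_left hE hc)

lemma log_t0 : (1.5785662487 : ℝ) ≤ Real.log 4.848 := by
  rw [Real.le_log_iff_exp_le (by norm_num)]; exact lg_t0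

lemma log_t1 : Real.log 4.8495 ≤ (1.5788756069 : ℝ) := by
  rw [Real.log_le_iff_le_exp (by norm_num)]; exact lg_t1

lemma log_t0' : Real.log 4.848 ≤ (1.5788756069 : ℝ) := by
  rw [Real.log_le_iff_le_exp (by norm_num)]; exact le_trans (by norm_num) lg_t1

lemma log_t1' : (1.5785662487 : ℝ) ≤ Real.log 4.8495 := by
  rw [Real.le_log_iff_exp_le (by norm_num)]; exact lg_t0.trans (by norm_num)

/-- the existence of the crossing, by connectedness -/
lemma exists_cross (Pp Pm Qp Qm : ℝ → ℝ) (t0 t1 l0 l1 : ℝ) (ht : t0 ≤ t1) (hl : l0 ≤ l1)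
    (cPp : ContinuousOn Pp (Set.Icc l0 l1)) (cPm : ContinuousOn Pm (Set.Icc l0 l1))
    (cQp : ContinuousOn Qp (Set.Icc t0 t1)) (cQm : ContinuousOn Qm (Set.Icc t0 t1))
    (mPp : StrictAntiOn Pp (Set.Icc l0 l1)) (mPm : StrictAntiOn Pm (Set.Icc l0 l1))
    (mQp : StrictAntiOn Qp (Set.Icc t0 t1))
    (i1 : Qp t0 < Pp l0) (i2 : Pp l1 < Qp t1) (i3 : Qm t0 < Pm l1) (i4 : Pm l0 < Qm t1) :
    ∃ t ∈ Set.Icc t0 t1, ∃ l ∈ Set.Icc l0 l1, Pp l = Qp t ∧ Pm l = Qm t := by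
  have ex : ∀ t ∈ Set.Icc t0 t1, ∃ l ∈ Set.Icc l0 l1, Pp l = Qp t := by
    intro t h
    have a1 := mQp.antitoneOn (Set.left_mem_Icc.2 ht) h h.1
    have a2 := mQp.antitoneOn h (Set.right_mem_Icc.2 ht) h.2
    obtain ⟨l, hl', e⟩ := intermediate_value_Icc' hl cPp
      (show Qp t ∈ Set.Icc (Pp l1) (Pp l0) from ⟨by linarith, by linarith⟩)
    exact ⟨l, hl', e⟩
  let box : Set (ℝ × ℝ) := Set.Icc t0 t1 ×ˢ Set.Icc l0 l1
  have hbox : IsCompact box := isCompact_Icc.prod isCompact_Icc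
  have c1 : ContinuousOn (fun z : ℝ × ℝ => Pp z.2) box :=
    cPp.comp continuousOn_snd (fun z hz => hz.2)
  have c2 : ContinuousOn (fun z : ℝ × ℝ => Pm z.2) box :=
    cPm.comp continuousOn_snd (fun z hz => hz.2)
  have c3 : ContinuousOn (fun z : ℝ × ℝ => Qp z.1) box :=
    cQp.comp continuousOn_fst (fun z hz => hz.1)
  have c4 : ContinuousOn (fun z : ℝ × ℝ => Qm z.1) box :=
    cQm.comp continuousOn_fst (fun z hz => hz.1)
  have k0 : IsCompact (box ∩ (fun z : ℝ × ℝ => Pp z.2 - Qp z.1) ⁻¹' {0}) :=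
    hbox.of_isClosed_subset
      ((c1.sub c3).preimage_isClosed_of_isClosed hbox.isClosed isClosed_singleton)
      Set.inter_subset_left
  have kA : IsCompact ((box ∩ (fun z : ℝ × ℝ => Pp z.2 - Qp z.1) ⁻¹' {0}) ∩
      (box ∩ (fun z : ℝ × ℝ => Pm z.2 - Qm z.1) ⁻¹' Set.Ici 0)) :=
    k0.inter_right ((c2.sub c4).preimage_isClosed_of_isClosed hbox.isClosed isClosed_Ici)
  have kB : IsCompact ((box ∩ (fun z : ℝ × ℝ => Pp z.2 - Qp z.1) ⁻¹' {0}) ∩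
      (box ∩ (fun z : ℝ × ℝ => Pm z.2 - Qm z.1) ⁻¹' Set.Iic 0)) :=
    k0.inter_right ((c2.sub c4).preimage_isClosed_of_isClosed hbox.isClosed isClosed_Iic)
  have conn := isPreconnected_closed_iff.1 (isPreconnected_Icc (a := t0) (b := t1))
    _ _ (kA.image continuous_fst).isClosed (kB.image continuous_fst).isClosed
  obtain ⟨t, ht', ⟨⟨ta, la⟩, ⟨⟨ha1, ha2⟩, ha3, ha4⟩, rfl⟩, ⟨tb, lb⟩, ⟨⟨hb1, hb2⟩, hb3, hb4⟩, hab⟩ :=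
    conn
    (by
        intro t h
        obtain ⟨l, hl', e⟩ := ex t h
        rcases le_total 0 (Pm l - Qm t) with h' | h'
        · exact Or.inl ⟨(t, l), ⟨⟨⟨h, hl'⟩, by simp [e]⟩, ⟨h, hl'⟩, h'⟩, rfl⟩
        · exact Or.inr ⟨(t, l), ⟨⟨⟨h, hl'⟩, by simp [e]⟩, ⟨h, hl'⟩, h'⟩, rfl⟩)
    (by
      have h := Set.left_mem_Icc.2 ht
      obtain ⟨l, hl', e⟩ := ex t0 h
      refine ⟨t0, h, (t0, l), ⟨⟨⟨h, hl'⟩, by simp [e]⟩, ⟨h, hl'⟩, ?_⟩, rfl⟩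
      have := mPm.antitoneOn hl' (Set.right_mem_Icc.2 hl) hl'.2
      simp only [Set.mem_preimage, Set.mem_Ici]
      linarith)
    (by
      have h := Set.right_mem_Icc.2 ht
      obtain ⟨l, hl', e⟩ := ex t1 h
      refine ⟨t1, h, (t1, l), ⟨⟨⟨h, hl'⟩, by simp [e]⟩, ⟨h, hl'⟩, ?_⟩, rfl⟩
      have := mPm.antitoneOn (Set.left_mem_Icc.2 hl) hl' hl'.1
      simp only [Set.mem_preimage, Set.mem_Iic]
      linarith)
  simp only at hab
  subst hab
  simp only [Set.mem_preimage, Set.mem_singleton_iff, Set.mem_Ici, Set.mem_Iic] at ha2 hb2 ha4 hb4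
  have : la = lb := mPp.injOn ha1.2 hb1.2 (by linarith)
  subst this
  exact ⟨tb, ha1.1, la, ha1.2, by linarith, by linarith⟩

lemma exists_sol (gp gm W : ℝ) (hp : 0.01003209628301824 < gp ∧ gp < 0.01003209628301825)
    (hm : -0.51841009628301825 < gm ∧ gm < -0.51841009628301824)
    (h1 : gp + gm = -0.508378) (h2 : gp * gm = -0.00520074)
    (hW1 : 0.429686074 < W) (hW2 : W < 0.429686088) :
    ∃ t ∈ Set.Icc (4.848 : ℝ) 4.8495, ∃ l ∈ Set.Icc (7.95013 : ℝ) 7.95023,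
      ((l⁻¹) ^ 2 - gm * (1 - l⁻¹)) * Real.exp (-gp * l) =
        (W + 0.00520074 * (t - Real.log t) - 0.508378 * (1 - t⁻¹)
          - gm * (1 - t⁻¹)) * Real.exp (-gp * t) ∧
      ((l⁻¹) ^ 2 - gp * (1 - l⁻¹)) * Real.exp (-gm * l) =
        (W + 0.00520074 * (t - Real.log t) - 0.508378 * (1 - t⁻¹)
          - gp * (1 - t⁻¹)) * Real.exp (-gm * t) := by
  have h1' : gm + gp = -0.508378 := by linarith
  have h2' : gm * gp = -0.00520074 := by linarith
  have L0 := log_t0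
  have L1 := log_t1
  have L0' := log_t0'
  have L1' := log_t1'
  have nz : ∀ x a : ℝ, 1 < a → a ≤ x → x ≠ 0 := fun x a h h' => by linarith
  refine exists_cross
    (fun l => ((l⁻¹) ^ 2 - gm * (1 - l⁻¹)) * Real.exp (-gp * l))
    (fun l => ((l⁻¹) ^ 2 - gp * (1 - l⁻¹)) * Real.exp (-gm * l))
    (fun t => (W + 0.00520074 * (t - Real.log t) - 0.508378 * (1 - t⁻¹)
          - gm * (1 - t⁻¹)) * Real.exp (-gp * t))
    (fun t => (W + 0.00520074 * (t - Real.log t) - 0.508378 * (1 - t⁻¹)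
          - gp * (1 - t⁻¹)) * Real.exp (-gm * t))
    4.848 4.8495 7.95013 7.95023 (by norm_num) (by norm_num)
    (fun x hx => (hasDerivAt_P gp gm x (nz x _ (by norm_num) hx.1) h1 h2).continuousAt.continuousWithinAt)
    (fun x hx => (hasDerivAt_P gm gp x (nz x _ (by norm_num) hx.1) h1' h2').continuousAt.continuousWithinAt)
    (fun x hx => (hasDerivAt_Q W gp gm x (nz x _ (by norm_num) hx.1) h1 h2).continuousAt.continuousWithinAt)
    (fun x hx => (hasDerivAt_Q W gm gp x (nz x _ (by norm_num) hx.1) h1' h2').continuousAt.continuousWithinAt)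
    (P_anti gp gm h1 h2) (P_anti gm gp h1' h2')
    (Q_anti W gp gm (by linarith [hp.1]) h1 h2 (by linarith)) ?_ ?_ ?_ ?_
  all_goals obtain ⟨hp1, hp2⟩ := hp
  all_goals obtain ⟨hm1, hm2⟩ := hm
  all_goals clear h1 h1' h2 h2' nz
  · apply cmp_hi (E := 1.031610183818)
    · refine le_trans (Real.exp_le_exp.2 ?_) Ep_1
      norm_num at *; linarith
    · norm_num at *; linarith
    · norm_num at *; linarith
  · apply cmp_lo (E := 1.031595695020)
    · refine le_trans Ep_2 (Real.exp_le_exp.2 ?_)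
      norm_num at *; linarith
    · norm_num at *; linarith
    · norm_num at *; linarith
  · apply cmp_hi (E := 0.200242258494)
    · refine le_trans (Real.exp_le_exp.2 ?_) Em_3
      norm_num at *; linarith
    · norm_num at *; linarith
    · norm_num at *; linarith
  · apply cmp_lo (E := 0.200408419568)
    · refine le_trans Em_4 (Real.exp_le_exp.2 ?_)
      norm_num at *; linarith
    · norm_num at *; linarith
    · norm_num at *; linarith

/-- For `σ = √2`, `μ = 0.508378`, `r = 0.00520074` and any `b₁ ∈ (4.18, 4.19)` solving the
smooth-fit equation, there exist constants `C₁, C₂, D` and thresholds `θ ∈ (4.84, 4.85)`,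
`λ ∈ (7.95, 7.96)` with `b₁ < θ < λ` satisfying the five matching equations. -/
theorem stmt12 (σ μ r : ℝ)
    (hσ : σ = Real.sqrt 2) (hμ : μ = 0.508378) (hr : r = 0.00520074)
    (γp γm : ℝ)
    (hγp : γp = (-μ + Real.sqrt (μ ^ 2 + 2 * r * σ ^ 2)) / σ ^ 2)
    (hγm : γm = (-μ - Real.sqrt (μ ^ 2 + 2 * r * σ ^ 2)) / σ ^ 2)
    (φ : ℝ → ℝ)
    (hφ : ∀ x, φ x = Real.exp (γp * x) / γp - Real.exp (γm * x) / γm)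
    (η : ℝ → ℝ)
    (hη : ∀ x, η x = if 0 < x then max (1 - 1 / x) 0 else 0)
    (b₁ A B : ℝ) (hb₁ : b₁ ∈ Set.Ioo (4.18 : ℝ) 4.19)
    (hA : A = η b₁ / deriv φ b₁) (hB : B = A * φ b₁)
    (hfit : b₁ ^ 2 - b₁ =
      (Real.exp (γp * b₁) - Real.exp (γm * b₁)) /
        (γp * Real.exp (γp * b₁) - γm * Real.exp (γm * b₁))) :
    ∃ C₁ C₂ D θ lam : ℝ,
      b₁ < θ ∧ θ < lam ∧
      θ ∈ Set.Ioo (4.84 : ℝ) 4.85 ∧ lam ∈ Set.Ioo (7.95 : ℝ) 7.96 ∧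
      C₁ * Real.exp (γp * θ) + C₂ * Real.exp (γm * θ) =
        B + θ - b₁ - Real.log (θ / b₁) ∧
      C₁ * γp * Real.exp (γp * θ) + C₂ * γm * Real.exp (γm * θ) = 1 - 1 / θ ∧
      C₁ * Real.exp (γp * lam) + C₂ * Real.exp (γm * lam) = D ∧
      C₁ * γp * Real.exp (γp * lam) + C₂ * γm * Real.exp (γm * lam) = 1 - 1 / lam ∧
      C₁ * γp ^ 2 * Real.exp (γp * lam) + C₂ * γm ^ 2 * Real.exp (γm * lam) =
        1 / lam ^ 2 := by
  have hσ2 : σ ^ 2 = 2 := by rw [hσ]; exact Real.sq_sqrt (by norm_num)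
  obtain ⟨s, hs⟩ : ∃ s, s = Real.sqrt (0.508378 ^ 2 + 0.02080296) := ⟨_, rfl⟩
  have hs' : Real.sqrt (μ ^ 2 + 2 * r * σ ^ 2) = s := by
    rw [hs, hσ2, hμ, hr]; norm_num
  rw [hs', hσ2, hμ] at hγp hγm
  obtain ⟨hs1, hs2⟩ := gam_bounds s hs
  have hsq : s ^ 2 = 0.508378 ^ 2 + 0.02080296 := by
    rw [hs]; exact Real.sq_sqrt (by norm_num)
  have hp : 0.01003209628301824 < γp ∧ γp < 0.01003209628301825 := by
    rw [hγp]; norm_num at *; constructor <;> linarith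
  have hm : -0.51841009628301825 < γm ∧ γm < -0.51841009628301824 := by
    rw [hγm]; norm_num at *; constructor <;> linarith
  have h1 : γp + γm = -0.508378 := by rw [hγp, hγm]; ring
  have h2 : γp * γm = -0.00520074 := by
    rw [hγp, hγm]; norm_num at hsq ⊢; nlinarith
  clear hγp hγm hs' hs1 hs2 hsq hs
  have hp0 : 0 < γp := by linarith [hp.1]
  have hm0 : γm < 0 := by linarith [hm.2]
  have hb0 : 0 < b₁ := by linarith [hb₁.1]
  have hd : deriv φ b₁ = Real.exp (γp * b₁) - Real.exp (γm * b₁) := by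
    have hep : HasDerivAt (fun x : ℝ => Real.exp (γp * x)) (Real.exp (γp * b₁) * (γp * 1)) b₁ :=
      ((hasDerivAt_id b₁).const_mul γp).exp
    have hem : HasDerivAt (fun x : ℝ => Real.exp (γm * x)) (Real.exp (γm * b₁) * (γm * 1)) b₁ :=
      ((hasDerivAt_id b₁).const_mul γm).exp
    have := (hep.div_const γp).sub (hem.div_const γm)
    rw [funext hφ]
    refine (this.congr_deriv ?_).deriv
    field_simp [hm0.ne]
  have hη' : η b₁ = 1 - b₁⁻¹ := by
    rw [hη, if_pos hb0, one_div, max_eq_left]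
    have : b₁⁻¹ ≤ 1 := inv_le_one_of_one_le₀ (by linarith [hb₁.1])
    linarith
  rw [hd, hη'] at hA
  rw [hφ, hA] at hB
  set p := Real.exp (γp * b₁) with hpdef
  set m := Real.exp (γm * b₁) with hmdef
  have ppos : 0 < p := Real.exp_pos _
  have mpos : 0 < m := Real.exp_pos _
  have hφ2 : 0 < γp * p - γm * m := by nlinarith [mul_pos hp0 ppos, mul_pos (neg_pos.2 hm0) mpos]
  have hbb : 0 < b₁ ^ 2 - b₁ := by nlinarith [hb₁.1]
  rw [eq_div_iff hφ2.ne'] at hfit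
  obtain ⟨hb1, hb2⟩ := b_bracket γp γm b₁ hp hm h1 h2 hb₁ (by rw [← hpdef, ← hmdef]; linarith)
  obtain ⟨hW1, hW2⟩ := W_bounds b₁ hb1 hb2
  have hB' : 0.00520074 * B = 0.508378 * (1 - b₁⁻¹) + (b₁⁻¹) ^ 2 := by
    have hφ1 : 0 < p - m := by rw [← hfit]; positivity
    have e1 : 0.00520074 * (p / γp - m / γm) = (γp * p - γm * m) + 0.508378 * (p - m) := by
      have hg : 0.508378 = -(γp + γm) := by linarith
      have hg2 : 0.00520074 = -(γp * γm) := by linarith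
      rw [hg, hg2]
      field_simp [hm0.ne]
      ring
    have e2 : 0.00520074 * B = (1 - b₁⁻¹) * (0.00520074 * (p / γp - m / γm)) / (p - m) := by
      rw [hB]; ring
    rw [e2, e1, ← hfit]
    have : b₁ - 1 ≠ 0 := by linarith
    have hbf : b₁ ^ 2 - b₁ = b₁ * (b₁ - 1) := by ring
    generalize γp * p - γm * m = u at *
    rw [hbf]
    field_simp
    ring
  obtain ⟨W, hW⟩ : ∃ W, W = 0.508378 * (1 - b₁⁻¹) + (b₁⁻¹) ^ 2 - 0.00520074 * b₁
    + 0.00520074 * Real.log b₁ := ⟨_, rfl⟩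
  rw [← hW] at hW1 hW2
  obtain ⟨t, ht, l, hl, k1, k2⟩ := exists_sol γp γm W hp hm h1 h2 hW1 hW2
  have ht0 : 0 < t := lt_of_lt_of_le (by norm_num) ht.1
  have hl0 : 0 < l := lt_of_lt_of_le (by norm_num) hl.1
  obtain ⟨G, hG⟩ : ∃ G, G = W + 0.00520074 * (t - Real.log t) - 0.508378 * (1 - t⁻¹) := ⟨_, rfl⟩
  rw [← hG] at k1 k2
  have hgd : 0 < γp - γm := by linarith
  have cancel : ∀ g x : ℝ, Real.exp (-g * x) * Real.exp (g * x) = 1 := by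
    intro g x; rw [← Real.exp_add]; simp
  have hg0 : B + t - b₁ - Real.log (t / b₁) = (G + 0.508378 * (1 - t⁻¹)) / 0.00520074 := by
    rw [Real.log_div ht0.ne' hb0.ne', eq_div_iff (by norm_num), hG, hW]
    linarith
  obtain ⟨C₁, hC₁⟩ : ∃ C, C = (G - γm * (1 - t⁻¹)) * Real.exp (-γp * t) / (γp * (γp - γm)) :=
    ⟨_, rfl⟩
  obtain ⟨C₂, hC₂⟩ : ∃ C, C = -((G - γp * (1 - t⁻¹)) * Real.exp (-γm * t)) / (γm * (γp - γm)) :=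
    ⟨_, rfl⟩
  have p1 : C₁ * Real.exp (γp * t) = (G - γm * (1 - t⁻¹)) / (γp * (γp - γm)) := by
    rw [hC₁, div_mul_eq_mul_div, mul_assoc, cancel, mul_one]
  have p2 : C₂ * Real.exp (γm * t) = -(G - γp * (1 - t⁻¹)) / (γm * (γp - γm)) := by
    rw [hC₂, div_mul_eq_mul_div, neg_mul, mul_assoc, cancel, mul_one]
  have q1 : C₁ * Real.exp (γp * l) = ((l⁻¹) ^ 2 - γm * (1 - l⁻¹)) / (γp * (γp - γm)) := by
    rw [hC₁, ← k1, div_mul_eq_mul_div, mul_assoc, cancel, mul_one]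
  have q2 : C₂ * Real.exp (γm * l) = -((l⁻¹) ^ 2 - γp * (1 - l⁻¹)) / (γm * (γp - γm)) := by
    rw [hC₂, ← k2, div_mul_eq_mul_div, neg_mul, mul_assoc, cancel, mul_one]
  have hm0' := hm0.ne
  have hgd' := hgd.ne'
  have hg : 0.508378 = -(γp + γm) := by linarith
  have hg2 : 0.00520074 = -(γp * γm) := by linarith
  refine ⟨C₁, C₂, _, t, l, ?_, ?_, ⟨?_, ?_⟩, ⟨?_, ?_⟩, ?_, ?_, rfl, ?_, ?_⟩
  · refine lt_of_lt_of_le ?_ ht.1; refine hb2.trans ?_; norm_num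
  · refine lt_of_le_of_lt ht.2 (lt_of_lt_of_le ?_ hl.1); norm_num
  · refine lt_of_lt_of_le ?_ ht.1; norm_num
  · refine lt_of_le_of_lt ht.2 ?_; norm_num
  · refine lt_of_lt_of_le ?_ hl.1; norm_num
  · refine lt_of_le_of_lt hl.2 ?_; norm_num
  · rw [hg0, p1, p2, hg, hg2]
    generalize 1 - t⁻¹ = h
    field_simp
    ring
  · rw [mul_right_comm, p1, mul_right_comm C₂, p2, one_div]
    generalize 1 - t⁻¹ = h
    field_simp
    ring
  · rw [mul_right_comm, q1, mul_right_comm C₂, q2, one_div]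
    generalize 1 - l⁻¹ = h
    field_simp
    ring
  · rw [mul_right_comm, q1, mul_right_comm C₂, q2, one_div, ← inv_pow]
    generalize 1 - l⁻¹ = h
    field_simp
    ring
end

section
/- For the parameter values σ = √2, μ = 0.508378, r = 0.00520074, let b ∈ (4.18, 4.19) satisfy the smooth-fit equation b² − b = (e^{γ₊b} − e^{γ₋b})/(γ₊e^{γ₊b} − γ₋e^{γ₋b}). Then the barrier-policy value v_b fails the Hamilton–Jacobi–Bellman inequality ℒv_b ≤ 0: there exists x > b such that −r·v_b(x) + μ·(1 − 1/x) + (σ²/2)·(1/x²) > 0. -/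
/-- For `σ = √2`, `μ = 0.508378`, `r = 0.00520074` and `b ∈ (4.18, 4.19)` solving the
smooth-fit equation, the barrier value `v_b` fails the HJB inequality `ℒv_b ≤ 0`:
there is `x > b` with `−r·v_b(x) + μ·(1 − 1/x) + (σ²/2)·(1/x²) > 0`. -/
theorem stmt13 (σ μ r : ℝ)
    (hσ : σ = Real.sqrt 2) (hμ : μ = 0.508378) (hr : r = 0.00520074)
    (γp γm : ℝ)
    (hγp : γp = (-μ + Real.sqrt (μ ^ 2 + 2 * r * σ ^ 2)) / σ ^ 2)
    (hγm : γm = (-μ - Real.sqrt (μ ^ 2 + 2 * r * σ ^ 2)) / σ ^ 2)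
    (φ : ℝ → ℝ)
    (hφ : ∀ x, φ x = Real.exp (γp * x) / γp - Real.exp (γm * x) / γm)
    (η : ℝ → ℝ)
    (hη : ∀ x, η x = if 0 < x then max (1 - 1 / x) 0 else 0)
    (b : ℝ) (hb : b ∈ Set.Ioo (4.18 : ℝ) 4.19)
    (hfit : b ^ 2 - b =
      (Real.exp (γp * b) - Real.exp (γm * b)) /
        (γp * Real.exp (γp * b) - γm * Real.exp (γm * b)))
    (vb : ℝ → ℝ)
    (hvb1 : ∀ x ∈ Set.Icc 0 b, vb x = (η b / deriv φ b) * φ x)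
    (hvb2 : ∀ x ∈ Set.Ici b, vb x = η b * φ b / deriv φ b + ∫ u in b..x, η u) :
    ∃ x : ℝ, b < x ∧
      -r * vb x + μ * (1 - 1 / x) + σ ^ 2 / 2 * (1 / x ^ 2) > 0 := by
  have hσ2 : σ ^ 2 = 2 := by rw [hσ]; exact Real.sq_sqrt (by norm_num)
  obtain ⟨hb1, hb2⟩ := hb
  have hb0 : 0 < b := by linarith
  have hrpos : 0 < r := by rw [hr]; norm_num
  rw [hσ2] at hγp hγm
  have hs : Real.sqrt (μ ^ 2 + 2 * r * 2) ^ 2 = μ ^ 2 + 2 * r * 2 :=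
    Real.sq_sqrt (by positivity)
  generalize Real.sqrt (μ ^ 2 + 2 * r * 2) = s at hs hγp hγm
  have qp : γp ^ 2 + μ * γp = r := by rw [hγp]; linear_combination hs / 4
  have qm : γm ^ 2 + μ * γm = r := by rw [hγm]; linear_combination hs / 4
  have hp0 : γp ≠ 0 := by rintro h; rw [h] at qp; norm_num at qp; linarith
  have hm0 : γm ≠ 0 := by rintro h; rw [h] at qm; norm_num at qm; linarith
  have hd : deriv φ b = Real.exp (γp * b) - Real.exp (γm * b) := by
    have h : ∀ c : ℝ, c ≠ 0 → HasDerivAt (fun x => Real.exp (c * x) / c) (Real.exp (c * b)) b := by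
      intro c hc
      have h1 : HasDerivAt (fun x : ℝ => c * x) c b := by
        simpa using (hasDerivAt_id b).const_mul c
      have h2 := h1.exp.div_const c
      rwa [mul_div_cancel_right₀ _ hc] at h2
    have he : φ = fun x => Real.exp (γp * x) / γp - Real.exp (γm * x) / γm := funext hφ
    rw [he]
    exact ((h γp hp0).sub (h γm hm0)).deriv
  have hφb : r * φ b = μ * (Real.exp (γp * b) - Real.exp (γm * b))
      + (γp * Real.exp (γp * b) - γm * Real.exp (γm * b)) := by
    rw [hφ b]
    generalize Real.exp (γp * b) = P
    generalize Real.exp (γm * b) = M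
    field_simp
    linear_combination (-γm * P) * qp + (γp * M) * qm
  have hbb : 0 < b ^ 2 - b := by nlinarith
  have hηb : η b = 1 - 1 / b := by
    rw [hη, if_pos hb0, max_eq_left]
    rw [sub_nonneg, div_le_one hb0]; linarith
  generalize hD1 : Real.exp (γp * b) - Real.exp (γm * b) = D1 at *
  generalize hD2 : γp * Real.exp (γp * b) - γm * Real.exp (γm * b) = D2 at *
  have h20 : D2 ≠ 0 := by rintro h; rw [h, div_zero] at hfit; linarith
  have h10 : D1 ≠ 0 := by rintro h; rw [h, zero_div] at hfit; linarith
  have hfit' : (b ^ 2 - b) * D2 = D1 := by rw [hfit]; field_simp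
  have hval : r * (η b * φ b / deriv φ b) = μ * (1 - 1 / b) + 1 / b ^ 2 := by
    have : r * (η b * φ b / deriv φ b) = η b * (r * φ b) / deriv φ b := by ring
    rw [this, hφb, hd, hηb]
    field_simp
    linear_combination hfit'
  have hint : ∫ u in b..7, η u = (7 - b) - Real.log (7 / b) := by
    have h1 : ∫ u in b..7, η u = ∫ u in b..7, ((1:ℝ) - 1 / u) := by
      apply intervalIntegral.integral_congr
      intro u hu
      rw [Set.uIcc_of_le (by linarith)] at hu
      have hu0 : 0 < u := by linarith [hu.1]
      change η u = 1 - 1 / u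
      rw [hη, if_pos hu0, max_eq_left]
      rw [sub_nonneg, div_le_one hu0]; linarith [hu.1]
    have hz : (0:ℝ) ∉ Set.uIcc b 7 := by
      rw [Set.uIcc_of_le (by linarith)]
      intro h; linarith [h.1]
    rw [h1, intervalIntegral.integral_sub, integral_one_div hz]
    · simp
    · simp
    · exact intervalIntegral.intervalIntegrable_one_div
        (fun x hx h => hz (h ▸ hx)) continuousOn_id
  have hlog : (1:ℝ) / 2 ≤ Real.log (7 / b) := by
    have h1 : (1:ℝ) ≤ Real.log ((7 / b) ^ 2) := by
      rw [Real.le_log_iff_exp_le (by positivity), div_pow, le_div_iff₀ (by positivity)]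
      have := Real.exp_one_lt_d9
      have h3 : b ^ 2 ≤ 4.19 ^ 2 := by gcongr
      have h4 : 0 < Real.exp 1 := Real.exp_pos 1
      nlinarith
    rw [Real.log_pow] at h1
    push_cast at h1
    linarith
  refine ⟨7, by linarith, ?_⟩
  rw [hvb2 7 (by rw [Set.mem_Ici]; linarith), hint, hσ2]
  generalize η b * φ b / deriv φ b = V at *
  have hrl : r * (1 / 2) ≤ r * Real.log (7 / b) := by gcongr
  have key : 0 < -(μ * (1 - 1 / b) + 1 / b ^ 2) - r * (7 - b) + r * (1 / 2)
      + μ * (1 - 1 / 7) + 2 / 2 * (1 / 7 ^ 2) := by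
    have hi1 : 1 / 4.19 ≤ 1 / b := one_div_le_one_div_of_le hb0 hb2.le
    have hi2 : 1 / b ≤ 1 / 4.18 := one_div_le_one_div_of_le (by norm_num) hb1.le
    have hi3 : 1 / b ^ 2 = (1 / b) ^ 2 := by ring
    rw [hi3, hμ, hr]
    have hbt : b * (1 / b) = 1 := by field_simp
    generalize 1 / b = t at *
    norm_num at hi1 hi2 ⊢
    nlinarith [mul_nonneg (sub_nonneg.2 hi1) (sub_nonneg.2 hi2)]
  linarith
end

section
/- Suppose η : [0,∞) → ℝ vanishes on [0, x*], is continuous on [0,∞), is strictly increasing, concave and differentiable on (x*, ∞), and is bounded above, where x* > 0. Then the smooth-fit equation γ₊·η(b) = η'(b) has exactly one solution b* in (x*, ∞). -/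
/-- If `η` vanishes on `[0, x*]`, is continuous on `[0,∞)`, strictly increasing, concave
and differentiable on `(x*, ∞)`, and bounded above (`x* > 0`), then the smooth-fit equation
`γ₊·η(b) = η'(b)` has exactly one solution `b*` in `(x*, ∞)`. -/
theorem stmt15 (μ σ r : ℝ) (hσ : 0 < σ) (hr : 0 < r)
    (γp : ℝ)
    (hγp : γp = (-μ + Real.sqrt (μ ^ 2 + 2 * r * σ ^ 2)) / σ ^ 2)
    (xstar : ℝ) (hx : 0 < xstar)
    (η : ℝ → ℝ)
    (hcont : ContinuousOn η (Set.Ici 0))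
    (h0 : ∀ x ∈ Set.Icc 0 xstar, η x = 0)
    (hmono : StrictMonoOn η (Set.Ioi xstar))
    (hconc : ConcaveOn ℝ (Set.Ioi xstar) η)
    (hdiff : ∀ x ∈ Set.Ioi xstar, DifferentiableAt ℝ η x)
    (hbdd : ∃ M : ℝ, ∀ x ∈ Set.Ici (0 : ℝ), η x ≤ M) :
    ∃! b : ℝ, b ∈ Set.Ioi xstar ∧ γp * η b = deriv η b := by
  have hγ : 0 < γp := by
    rw [hγp]
    apply div_pos _ (by positivity)
    have : μ < Real.sqrt (μ ^ 2 + 2 * r * σ ^ 2) := by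
      apply Real.lt_sqrt_of_sq_lt
      have : 0 < 2 * r * σ ^ 2 := by positivity
      linarith
    linarith
  obtain ⟨M, hM⟩ := hbdd
  have hnn : ∀ x, xstar < x → 0 ≤ η x := by
    intro x hxx
    have hc : Filter.Tendsto η (nhdsWithin xstar (Set.Ioi xstar)) (nhds (η xstar)) :=
      (hcont xstar hx.le).mono_left
        (nhdsWithin_mono _ (fun y hy => (hx.trans hy).le))
    rw [h0 xstar ⟨hx.le, le_rfl⟩] at hc
    refine le_of_tendsto hc ?_
    filter_upwards [Ioo_mem_nhdsGT hxx] with y hy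
    exact (hmono hy.1 hxx hy.2).le
  have hpos : ∀ x, xstar < x → 0 < η x := by
    intro x hxx
    obtain ⟨y, hy1, hy2⟩ := exists_between hxx
    exact (hnn y hy1).trans_lt (hmono hy1 hxx hy2)
  have hanti : AntitoneOn (deriv η) (Set.Ioi xstar) :=
    hconc.antitoneOn_deriv hdiff
  have huniq : ∀ a b, xstar < a → a < b → γp * η a = deriv η a → γp * η b = deriv η b → False := by
    intro a b ha hab e1 e2
    have h1 := hanti (a := a) (b := b) ha (ha.trans hab) hab.le
    have h2 := mul_lt_mul_of_pos_left (hmono ha (ha.trans hab) hab) hγ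
    linarith
  have hex : ∃ b, xstar < b ∧ γp * η b = deriv η b := by
    set f : ℝ → ℝ := fun x => Real.exp (-(γp * x)) * η x with hf
    have hfc : 0 < f (xstar + 1) := mul_pos (Real.exp_pos _) (hpos _ (by linarith))
    have hlim : Filter.Tendsto (fun x : ℝ => Real.exp (-(γp * x)) * M) Filter.atTop (nhds 0) := by
      have h1 : Filter.Tendsto (fun x : ℝ => γp * x) Filter.atTop Filter.atTop :=
        Filter.tendsto_id.const_mul_atTop hγ
      have h2 := (Real.tendsto_exp_neg_atTop_nhds_zero.comp h1).mul_const M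
      simpa using h2
    obtain ⟨N, hN1, hN2⟩ := ((hlim.eventually_lt_const hfc).and
      (Filter.eventually_gt_atTop (xstar + 1))).exists
    have hfN : f N < f (xstar + 1) :=
      (mul_le_mul_of_nonneg_left (hM N (by simp; linarith)) (Real.exp_pos _).le).trans_lt hN1
    have hfcont : ContinuousOn f (Set.Icc xstar N) := by
      apply ContinuousOn.mul (by fun_prop)
      exact hcont.mono (fun y hy => hx.le.trans hy.1)
    obtain ⟨b, hb, hmax⟩ := isCompact_Icc.exists_isMaxOn
      (Set.nonempty_Icc.2 (by linarith)) hfcont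
    have hbc : f (xstar + 1) ≤ f b := hmax ⟨by linarith, hN2.le⟩
    have hb1 : xstar < b := by
      rcases hb.1.eq_or_lt with h | h
      · exfalso
        have : f b = 0 := by simp [hf, ← h, h0 xstar ⟨hx.le, le_rfl⟩]
        linarith
      · exact h
    have hb2 : b < N := by
      rcases hb.2.eq_or_lt with h | h
      · exfalso
        rw [h] at hbc
        linarith
      · exact h
    have hloc : IsLocalMax f b := hmax.isLocalMax (Icc_mem_nhds hb1 hb2)
    have hd1 : HasDerivAt (fun x : ℝ => Real.exp (-(γp * x)))
        (Real.exp (-(γp * b)) * (-(γp * 1))) b :=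
      (((hasDerivAt_id b).const_mul γp).neg).exp
    have hz := hloc.hasDerivAt_eq_zero (hd1.mul (hdiff b hb1).hasDerivAt)
    refine ⟨b, hb1, ?_⟩
    have h3 : Real.exp (-(γp * b)) * (deriv η b - γp * η b) = 0 := by linarith
    rcases mul_eq_zero.1 h3 with h | h
    · exact absurd h (Real.exp_pos _).ne'
    · linarith
  obtain ⟨b, hb, e⟩ := hex
  refine ⟨b, ⟨hb, e⟩, ?_⟩
  rintro a ⟨ha, e'⟩
  rcases lt_trichotomy a b with h | h | h
  · exact (huniq a b ha h e' e).elim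
  · exact h
  · exact (huniq b a hb h e e').elim
end

section
/- Suppose η : ℝ → ℝ is continuous and differentiable at b ∈ ℝ. The no-reflection barrier value Ṽ_b is continuously differentiable on ℝ, satisfies ℒṼ_b(x) = −r·Ṽ_b(x) + μ·Ṽ_b'(x) + (σ²/2)·Ṽ_b''(x) = 0 for all x < b and Ṽ_b'(x) = η(x) for all x > b, and Ṽ_b is twice differentiable at b if and only if γ₊·η(b) = η'(b). -/
theorem glue_aux {f g h : ℝ → ℝ} {b d : ℝ} (hg : HasDerivAt g d b) (hh : HasDerivAt h d b)
    (h1 : ∀ x ≤ b, f x = g x) (h2 : ∀ x, b ≤ x → f x = h x) : HasDerivAt f d b := by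
  have a1 : HasDerivWithinAt f d (Set.Iic b) b :=
    hg.hasDerivWithinAt.congr (fun x hx => h1 x hx) (h1 b le_rfl)
  have a2 : HasDerivWithinAt f d (Set.Ici b) b :=
    hh.hasDerivWithinAt.congr (fun x hx => h2 x hx) (h2 b le_rfl)
  have := a1.union a2
  rwa [Set.Iic_union_Ici, hasDerivWithinAt_univ] at this

/-- For continuous `η` differentiable at `b`, the no-reflection barrier value `Ṽ_b` is `C¹`
on `ℝ`, satisfies `ℒṼ_b(x) = 0` for `x < b` and `Ṽ_b'(x) = η(x)` for `x > b`, and `Ṽ_b`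
is twice differentiable at `b` iff `γ₊·η(b) = η'(b)`. -/
theorem stmt16 (μ σ r : ℝ) (hσ : 0 < σ) (hr : 0 < r)
    (γp : ℝ)
    (hγp : γp = (-μ + Real.sqrt (μ ^ 2 + 2 * r * σ ^ 2)) / σ ^ 2)
    (η : ℝ → ℝ) (hcont : Continuous η)
    (b : ℝ) (hηb : DifferentiableAt ℝ η b)
    (Vb : ℝ → ℝ)
    (hVb : ∀ x, Vb x =
      if x ≤ b then γp⁻¹ * η b * Real.exp (γp * (x - b))
      else γp⁻¹ * η b + ∫ u in b..x, η u) :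
    ContDiff ℝ 1 Vb ∧
    (∀ x < b, -r * Vb x + μ * deriv Vb x + σ ^ 2 / 2 * deriv (deriv Vb) x = 0) ∧
    (∀ x > b, deriv Vb x = η x) ∧
    (DifferentiableAt ℝ (deriv Vb) b ↔ γp * η b = deriv η b) := by
  have hs2 : (0:ℝ) < σ ^ 2 := by positivity
  have hS0 : 0 ≤ μ ^ 2 + 2 * r * σ ^ 2 := by positivity
  have hsq := Real.sq_sqrt hS0
  have hgt : μ < Real.sqrt (μ ^ 2 + 2 * r * σ ^ 2) := by
    apply Real.lt_sqrt_of_sq_lt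
    have : 0 < 2 * r * σ ^ 2 := by positivity
    linarith
  have hγ : 0 < γp := by
    rw [hγp]; apply div_pos _ hs2; linarith
  have hmul : γp * σ ^ 2 + μ = Real.sqrt (μ ^ 2 + 2 * r * σ ^ 2) := by
    rw [hγp]; field_simp; ring
  have hquad : -r + μ * γp + σ ^ 2 / 2 * γp ^ 2 = 0 := by
    rw [← hmul] at hsq
    have : σ ^ 2 * (-r + μ * γp + σ ^ 2 / 2 * γp ^ 2) = 0 := by linarith
    exact (mul_eq_zero.mp this).resolve_left hs2.ne'
  have hexp : ∀ c x : ℝ, HasDerivAt (fun x => c * Real.exp (γp * (x - b)))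
      (c * γp * Real.exp (γp * (x - b))) x := by
    intro c x
    have h := ((((hasDerivAt_id x).sub_const b).const_mul γp).exp).const_mul c
    refine h.congr_deriv ?_
    simp only [id, mul_one]
    ring
  have hint : ∀ x : ℝ, HasDerivAt (fun x => γp⁻¹ * η b + ∫ u in b..x, η u) (η x) x := by
    intro x
    exact (hcont.integral_hasStrictDerivAt b x).hasDerivAt.const_add _
  have hc : γp⁻¹ * η b * γp = η b := by field_simp
  have hlt : ∀ x < b, HasDerivAt Vb (η b * Real.exp (γp * (x - b))) x := by
    intro x hx
    have h := hexp (γp⁻¹ * η b) x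
    rw [hc] at h
    refine h.congr_of_eventuallyEq ?_
    filter_upwards [Iio_mem_nhds hx] with y hy
    rw [hVb, if_pos (le_of_lt hy)]
  have hgtb : ∀ x > b, HasDerivAt Vb (η x) x := by
    intro x hx
    refine (hint x).congr_of_eventuallyEq ?_
    filter_upwards [Ioi_mem_nhds hx] with y hy
    rw [hVb, if_neg (not_le.mpr hy)]
  have hb : HasDerivAt Vb (η b) b := by
    have h := hexp (γp⁻¹ * η b) b
    rw [hc] at h
    simp only [sub_self, mul_zero, Real.exp_zero, mul_one] at h
    refine glue_aux h (hint b) (fun x hx => ?_) (fun x hx => ?_)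
    · rw [hVb, if_pos hx]
    · rw [hVb]
      rcases hx.eq_or_lt with rfl | hx
      · simp
      · rw [if_neg (not_le.mpr hx)]
  have hD1 : ∀ x ≤ b, deriv Vb x = η b * Real.exp (γp * (x - b)) := by
    intro x hx
    rcases hx.eq_or_lt with rfl | hx
    · rw [hb.deriv]; simp
    · exact (hlt x hx).deriv
  have hD2 : ∀ x, b ≤ x → deriv Vb x = η x := by
    intro x hx
    rcases hx.eq_or_lt with rfl | hx
    · exact hb.deriv
    · exact (hgtb x hx).deriv
  have hdiff : Differentiable ℝ Vb := by
    intro x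
    rcases lt_trichotomy x b with h | rfl | h
    · exact (hlt x h).differentiableAt
    · exact hb.differentiableAt
    · exact (hgtb x h).differentiableAt
  have hE := hexp (η b) b
  simp only [sub_self, mul_zero, Real.exp_zero, mul_one] at hE
  refine ⟨?_, ?_, fun x hx => hD2 x hx.le, ?_, ?_⟩
  · rw [contDiff_one_iff_deriv]
    refine ⟨hdiff, ?_⟩
    have : deriv Vb = fun x => if x ≤ b then η b * Real.exp (γp * (x - b)) else η x := by
      funext x
      split_ifs with h
      · exact hD1 x h
      · exact hD2 x (not_le.mp h).le
    rw [this]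
    refine Continuous.if_le (by fun_prop) hcont continuous_id continuous_const ?_
    rintro x rfl
    simp
  · intro x hx
    have h2 : HasDerivAt (deriv Vb) (η b * γp * Real.exp (γp * (x - b))) x := by
      refine (hexp (η b) x).congr_of_eventuallyEq ?_
      filter_upwards [Iio_mem_nhds hx] with y hy
      exact hD1 y (le_of_lt hy)
    rw [h2.deriv, hD1 x hx.le, hVb, if_pos hx.le]
    have : -r * (γp⁻¹ * η b * Real.exp (γp * (x - b))) + μ * (η b * Real.exp (γp * (x - b)))
        + σ ^ 2 / 2 * (η b * γp * Real.exp (γp * (x - b)))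
        = γp⁻¹ * η b * Real.exp (γp * (x - b)) * (-r + μ * γp + σ ^ 2 / 2 * γp ^ 2) := by
      field_simp
    rw [this, hquad, mul_zero]
  · intro h
    have e1 : deriv (deriv Vb) b = η b * γp :=
      (uniqueDiffWithinAt_Iic b).eq_deriv _
        h.hasDerivAt.hasDerivWithinAt
        (hE.hasDerivWithinAt.congr (fun x hx => hD1 x hx) (by rw [hD1 b le_rfl]))
    have e2 : deriv (deriv Vb) b = deriv η b :=
      (uniqueDiffWithinAt_Ici b).eq_deriv _
        h.hasDerivAt.hasDerivWithinAt
        (hηb.hasDerivAt.hasDerivWithinAt.congr (fun x hx => hD2 x hx) (hD2 b le_rfl))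
    rw [← e2, e1, mul_comm]
  · intro h
    rw [mul_comm, h] at hE
    exact (glue_aux hE hηb.hasDerivAt hD1 hD2).differentiableAt
end

section
/- Let I ⊆ ℝ be an interval, let η : I → ℝ be concave on I and differentiable at a point b* ∈ I with η(b*) ≥ 0 and γ₊·η(b*) = η'(b*). Then η(x) ≤ η(b*)·e^{γ₊(x−b*)} for every x ∈ I. (Equivalently, the no-reflection barrier value Ṽ_{b*} satisfies the verification inequality η(x) − Ṽ_{b*}'(x) ≤ 0 on {x ∈ I : x ≤ b*}.) -/
/-- Let `I ⊆ ℝ` be an interval, `η` concave on `I` and differentiable at `b* ∈ I` with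
`η(b*) ≥ 0` and `γ₊·η(b*) = η'(b*)`. Then `η(x) ≤ η(b*)·e^{γ₊(x−b*)}` for every `x ∈ I`
(the verification inequality `η − Ṽ_{b*}' ≤ 0` below the barrier). -/
theorem stmt17 (μ σ r : ℝ) (hσ : 0 < σ) (hr : 0 < r)
    (γp : ℝ)
    (hγp : γp = (-μ + Real.sqrt (μ ^ 2 + 2 * r * σ ^ 2)) / σ ^ 2)
    (I : Set ℝ) (hI : Convex ℝ I)
    (η : ℝ → ℝ) (hconc : ConcaveOn ℝ I η)
    (bstar : ℝ) (hb : bstar ∈ I)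
    (hd : DifferentiableAt ℝ η bstar)
    (hpos : 0 ≤ η bstar)
    (hfit : γp * η bstar = deriv η bstar) :
    ∀ x ∈ I, η x ≤ η bstar * Real.exp (γp * (x - bstar)) := by
  intro x hx
  have key : η x ≤ η bstar + deriv η bstar * (x - bstar) := by
    rcases lt_trichotomy x bstar with h | h | h
    · have h1 := hconc.deriv_le_slope hx hb h hd
      rw [slope_def_field, le_div_iff₀ (by linarith)] at h1
      linarith
    · subst h; simp
    · have h1 := hconc.slope_le_deriv hb hx h hd
      rw [slope_def_field, div_le_iff₀ (by linarith)] at h1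
      linarith
  have h2 := mul_le_mul_of_nonneg_left (Real.add_one_le_exp (γp * (x - bstar))) hpos
  rw [← hfit] at key
  linarith
end
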